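/- (Theorem: minimax lower bound.) Consider the model Y = XA + Z with fixed design X ∈ ℝ^{n×p} and Z having i.i.d. N(0,σ²) entries. Suppose s ≥ 2r and the (2s)-sparse Riesz constants of X satisfy K^{-1} ≤ κ_-(2s) ≤ κ_+(2s) ≤ K for an absolute constant K > 1. Then there exists a constant c > 0 depending only on γ and κ_+(2s) such that for all q ∈ [1,2], inf over all estimators Â (measurable functions of Y) of sup over A ∈ Θ(s,r,d,γ) of E‖Â − A‖_{S_q}² is at least c σ² { (r^{2/q−1} d²/σ²) ∧ [ r^{2/q}(s + m) + r^{2/q−1} s log(ep/s) ] }. -/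

import Mathlib

open MeasureTheory ProbabilityTheory Matrix Set
open scoped ENNReal NNReal

noncomputable section

/-- Euclidean (ℓ₂) norm of a finitely indexed real vector. -/
def l2norm {I : Type*} [Fintype I] (v : I → ℝ) : ℝ := Real.sqrt (∑ i, v i ^ 2)

/-- Frobenius norm of a real matrix. -/
def frobNorm {I J : Type*} [Fintype I] [Fintype J] (M : Matrix I J ℝ) : ℝ :=
  Real.sqrt (∑ i, ∑ j, M i j ^ 2)

/-- ℓ₂/ℓ₁ norm: the sum of the ℓ₂ norms of the rows. -/
def norm21 {I J : Type*} [Fintype I] [Fintype J] (M : Matrix I J ℝ) : ℝ :=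
  ∑ i, l2norm (M i)

open Classical in
/-- Row support: indices of nonzero rows. -/
def rowSupport {I J : Type*} [Fintype I] [Fintype J] (M : Matrix I J ℝ) : Finset I :=
  Finset.univ.filter (fun i => M i ≠ 0)

/-- The j-th largest singular value (j ≥ 1), via the Courant–Fischer max–min
characterization: `σ_j(M) = max_{dim V = j} min_{v ∈ V, ‖v‖=1} ‖Mv‖`. -/
def singularValue {I J : Type*} [Fintype I] [Fintype J] (M : Matrix I J ℝ) (j : ℕ) : ℝ :=
  sSup { t | ∃ V : Submodule ℝ (J → ℝ), Module.finrank ℝ V = j ∧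
    t = sInf { u | ∃ v ∈ V, l2norm v = 1 ∧ u = l2norm (M.mulVec v) } }

/-- Operator norm (largest singular value). -/
def opNorm {I J : Type*} [Fintype I] [Fintype J] (M : Matrix I J ℝ) : ℝ :=
  sSup { t | ∃ v : J → ℝ, l2norm v = 1 ∧ t = l2norm (M.mulVec v) }

/-- Schatten-q norm. -/
def schattenNorm {I J : Type*} [Fintype I] [Fintype J] (M : Matrix I J ℝ) (q : ℝ) : ℝ :=
  (∑ i ∈ Finset.Icc 1 (min (Fintype.card I) (Fintype.card J)), singularValue M i ^ q) ^ (1 / q)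

/-- Squared lower k-sparse Riesz constant `κ₋²(k)`:
the minimum over column subsets B with |B| = k of the smallest eigenvalue of X_B' X_B. -/
def kappaMinusSq {n p : ℕ} (X : Matrix (Fin n) (Fin p) ℝ) (k : ℕ) : ℝ :=
  sInf { t | ∃ B : Finset (Fin p), B.card = k ∧ ∃ v : Fin p → ℝ,
    (∀ i, i ∉ B → v i = 0) ∧ l2norm v = 1 ∧ t = l2norm (X.mulVec v) ^ 2 }

/-- Squared upper k-sparse Riesz constant `κ₊²(k)`. -/
def kappaPlusSq {n p : ℕ} (X : Matrix (Fin n) (Fin p) ℝ) (k : ℕ) : ℝ :=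
  sSup { t | ∃ B : Finset (Fin p), B.card = k ∧ ∃ v : Fin p → ℝ,
    (∀ i, i ∉ B → v i = 0) ∧ l2norm v = 1 ∧ t = l2norm (X.mulVec v) ^ 2 }

def kappaMinus {n p : ℕ} (X : Matrix (Fin n) (Fin p) ℝ) (k : ℕ) : ℝ :=
  Real.sqrt (kappaMinusSq X k)

def kappaPlus {n p : ℕ} (X : Matrix (Fin n) (Fin p) ℝ) (k : ℕ) : ℝ :=
  Real.sqrt (kappaPlusSq X k)

/-- Membership in the parameter space Θ(s, r, d, γ): rank r, all nonzero singular values in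
(d, γd], and at most s nonzero rows. (Singular values are automatically nonincreasing.) -/
def memTheta {p m : ℕ} (A : Matrix (Fin p) (Fin m) ℝ) (s r : ℕ) (d γ : ℝ) : Prop :=
  A.rank = r ∧ 0 < d ∧ singularValue A 1 ≤ γ * d ∧ d < singularValue A r ∧
    (rowSupport A).card ≤ s

/-- `V` is a matrix of top-r right singular vectors of `M`: the columns of `V` are orthonormal
eigenvectors of `MᵀM`, the j-th column with eigenvalue `σ_j(M)²`. -/
def IsRightSingularVectors {I J : Type*} [Fintype I] [Fintype J] {r : ℕ}
    (M : Matrix I J ℝ) (V : Matrix J (Fin r) ℝ) : Prop :=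
  Vᵀ * V = 1 ∧ ∀ j : Fin r,
    (Mᵀ * M).mulVec (fun i => V i j) = (singularValue M (j.1 + 1)) ^ 2 • (fun i => V i j)

/-- `U` is a matrix of top-r left singular vectors of `M`. -/
def IsLeftSingularVectors {I J : Type*} [Fintype I] [Fintype J] {r : ℕ}
    (M : Matrix I J ℝ) (U : Matrix I (Fin r) ℝ) : Prop :=
  IsRightSingularVectors Mᵀ U

instance matrixMeasurableSpace {n m : ℕ} : MeasurableSpace (Matrix (Fin n) (Fin m) ℝ) :=
  (inferInstance : MeasurableSpace (Fin n → Fin m → ℝ))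

/-- Law of an n×m random matrix with i.i.d. N(0, v) entries. -/
def gaussianMatrix (n m : ℕ) (v : ℝ≥0) : Measure (Matrix (Fin n) (Fin m) ℝ) :=
  Measure.pi fun _ : Fin n => Measure.pi fun _ : Fin m => gaussianReal 0 v

open Classical in
/-- Kullback–Leibler divergence D(P‖Q). -/
def klDivM {Ω : Type*} [MeasurableSpace Ω] (P Q : Measure Ω) : ℝ≥0∞ :=
  if P ≪ Q ∧ Integrable (fun x => Real.log (P.rnDeriv Q x).toReal) P
  then ENNReal.ofReal (∫ x, Real.log (P.rnDeriv Q x).toReal ∂P)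
  else ∞

/-- ε-packing number of T with respect to the distance ρ: the maximal cardinality of a subset
of T whose pairwise ρ-distances are all at least ε. -/
def packingNumber {α : Type*} (T : Set α) (ρ : α → α → ℝ) (ε : ℝ) : ℕ :=
  sSup { k | ∃ S : Finset α, ↑S ⊆ T ∧ (∀ x ∈ S, ∀ y ∈ S, x ≠ y → ε ≤ ρ x y) ∧ S.card = k }

/-- Moore–Penrose pseudoinverse (characterized by the four Penrose equations). -/
def IsMoorePenrose {k : ℕ} (M Mi : Matrix (Fin k) (Fin k) ℝ) : Prop :=
  M * Mi * M = M ∧ Mi * M * Mi = Mi ∧ (M * Mi)ᵀ = M * Mi ∧ (Mi * M)ᵀ = Mi * M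

lemma lintegral_pi_prod' {ι : Type} [Fintype ι] {X : ι → Type} [∀ i, MeasurableSpace (X i)]
    (μ : ∀ i, Measure (X i)) [∀ i, IsProbabilityMeasure (μ i)] (f : ∀ i, X i → ℝ≥0∞)
    (hf : ∀ i, Measurable (f i)) :
    ∫⁻ x, ∏ i, f i (x i) ∂(Measure.pi μ) = ∏ i, ∫⁻ x, f i x ∂ μ i := by
  have h := ProbabilityTheory.iIndepFun_pi (μ := μ) (X := f) (fun i => (hf i).aemeasurable)
  have h2 := lintegral_prod_eq_prod_lintegral_of_indepFun (μ := Measure.pi μ) Finset.univ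
    (fun i (x : ∀ i, X i) => f i (x i)) h (fun i => (hf i).comp (measurable_pi_apply i))
  rw [h2]
  refine Finset.prod_congr rfl fun i _ => ?_
  exact (measurePreserving_eval μ i).lintegral_comp (hf i)

/-- `P` has a density with respect to `Q` with second moment at most `c`. -/
def ChiB {Ω : Type} [MeasurableSpace Ω] (P Q : Measure Ω) (c : ℝ≥0∞) : Prop :=
  ∃ f : Ω → ℝ≥0∞, Measurable f ∧ P = Q.withDensity f ∧ ∫⁻ x, f x ^ 2 ∂Q ≤ c

lemma ChiB.pi' {ι : Type} [Fintype ι] {X : ι → Type} [∀ i, MeasurableSpace (X i)]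
    (P Q : ∀ i, Measure (X i)) [∀ i, IsProbabilityMeasure (P i)] [∀ i, IsProbabilityMeasure (Q i)]
    (c : ι → ℝ≥0∞) (h : ∀ i, ChiB (P i) (Q i) (c i)) :
    ChiB (Measure.pi P) (Measure.pi Q) (∏ i, c i) := by
  choose f hf hP hc using h
  refine ⟨fun x => ∏ i, f i (x i), ?_, ?_, ?_⟩
  · exact Finset.measurable_prod _ fun i _ => (hf i).comp (measurable_pi_apply i)
  · refine Measure.pi_eq fun s hs => ?_
    rw [withDensity_apply _ (MeasurableSet.univ_pi hs), ← lintegral_indicator (MeasurableSet.univ_pi hs)]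
    have : ∀ x : ∀ i, X i, (Set.univ.pi s).indicator (fun x => ∏ i, f i (x i)) x
        = ∏ i, (s i).indicator (f i) (x i) := by
      intro x
      by_cases hx : x ∈ Set.univ.pi s
      · rw [Set.indicator_of_mem hx]
        refine Finset.prod_congr rfl fun i _ => ?_
        rw [Set.indicator_of_mem (hx i (mem_univ i))]
      · rw [Set.indicator_of_notMem hx]
        simp only [Set.mem_pi, mem_univ, true_implies, not_forall] at hx
        obtain ⟨i, hi⟩ := hx
        exact (Finset.prod_eq_zero (Finset.mem_univ i) (Set.indicator_of_notMem hi _)).symm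
    simp_rw [this]
    rw [lintegral_pi_prod' Q _ (fun i => (hf i).indicator (hs i))]
    refine Finset.prod_congr rfl fun i _ => ?_
    rw [lintegral_indicator (hs i), hP i, withDensity_apply _ (hs i)]
  · simp_rw [← Finset.prod_pow]
    rw [lintegral_pi_prod' Q (fun i x => f i x ^ 2) (fun i => (hf i).pow_const 2)]
    exact Finset.prod_le_prod' fun i _ => hc i

lemma ChiB.measure_le {Ω : Type} [MeasurableSpace Ω] {P Q : Measure Ω} {c : ℝ≥0∞}
    (h : ChiB P Q c) {B : Set Ω} (hB : MeasurableSet B) :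
    P B ≤ c ^ (1 / 2 : ℝ) * (Q B) ^ (1 / 2 : ℝ) := by
  obtain ⟨f, hf, rfl, hc⟩ := h
  rw [withDensity_apply _ hB, ← lintegral_indicator hB]
  have h1 := ENNReal.lintegral_mul_le_Lp_mul_Lq Q (p := 2) (q := 2)
    (by constructor <;> norm_num) hf.aemeasurable
    (g := B.indicator 1) ((measurable_one.indicator hB).aemeasurable)
  have h2 : ∀ x, B.indicator f x = (f * B.indicator (1 : Ω → ℝ≥0∞)) x := by
    intro x; by_cases hx : x ∈ B <;> simp [hx]
  simp_rw [h2]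
  refine h1.trans ?_
  have h3 : ∫⁻ a, (B.indicator (1 : Ω → ℝ≥0∞) a) ^ (2 : ℝ) ∂Q = Q B := by
    rw [← lintegral_indicator_one hB]
    congr 1; ext x
    by_cases hx : x ∈ B <;> simp [hx]
  rw [h3]
  gcongr
  simpa using hc

lemma chiB_gaussianReal (a b : ℝ) (v : ℝ≥0) (hv : v ≠ 0) :
    ChiB (gaussianReal a v) (gaussianReal b v) (ENNReal.ofReal (Real.exp ((a - b) ^ 2 / v))) := by
  have hv' : (v : ℝ) ≠ 0 := by exact_mod_cast hv
  have hm : Measurable (fun x : ℝ => ENNReal.ofReal (Real.exp ((a - b) * (2 * x - a - b) / (2 * v)))) := by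
    fun_prop
  refine ⟨fun x => ENNReal.ofReal (Real.exp ((a - b) * (2 * x - a - b) / (2 * v))), hm, ?_, ?_⟩
  · rw [gaussianReal_of_var_ne_zero _ hv, gaussianReal_of_var_ne_zero _ hv,
      ← withDensity_mul _ (measurable_gaussianPDF _ _) hm]
    congr 1
    ext x
    simp only [gaussianPDF, Pi.mul_apply, gaussianPDFReal]
    rw [← ENNReal.ofReal_mul (by positivity), mul_assoc (√(2 * Real.pi * v))⁻¹, ← Real.exp_add]
    congr 3
    field_simp
    ring
  · rw [gaussianReal_of_var_ne_zero _ hv, lintegral_withDensity_eq_lintegral_mul _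
      (measurable_gaussianPDF _ _) (hm.pow_const 2)]
    have : ∀ x, (gaussianPDF b v * fun x => ENNReal.ofReal (Real.exp ((a - b) * (2 * x - a - b) / (2 * v))) ^ 2) x
        = ENNReal.ofReal (Real.exp ((a - b) ^ 2 / v)) * gaussianPDF (2 * a - b) v x := by
      intro x
      simp only [gaussianPDF, Pi.mul_apply, gaussianPDFReal]
      rw [← ENNReal.ofReal_pow (by positivity), ← ENNReal.ofReal_mul (by positivity),
        ← ENNReal.ofReal_mul (by positivity), ← Real.exp_nat_mul, mul_assoc, ← Real.exp_add,
        mul_left_comm, ← Real.exp_add]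
      congr 3
      field_simp
      push_cast
      ring
    simp_rw [this]
    rw [lintegral_const_mul _ (measurable_gaussianPDF _ _), lintegral_gaussianPDF_eq_one _ hv, mul_one]

lemma gaussianMatrix_map (n m : ℕ) (v : ℝ≥0) (θ : Matrix (Fin n) (Fin m) ℝ) :
    (gaussianMatrix n m v).map (fun Z => θ + Z) =
      Measure.pi fun i : Fin n => Measure.pi fun j : Fin m => gaussianReal (θ i j) v := by
  unfold gaussianMatrix
  have h1 : ∀ i : Fin n, (Measure.pi fun _ : Fin m => gaussianReal 0 v).map
      (fun z : Fin m → ℝ => fun j => θ i j + z j) =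
      Measure.pi fun j : Fin m => gaussianReal (θ i j) v := by
    intro i
    have := Measure.pi_map_pi (μ := fun _ : Fin m => gaussianReal 0 v)
      (f := fun j x => θ i j + x)
      (hμ := fun j => by rw [gaussianReal_map_const_add]; infer_instance)
      (fun j => by fun_prop)
    rw [this]
    congr 1; ext1 j
    rw [gaussianReal_map_const_add, zero_add]
  have := Measure.pi_map_pi (μ := fun _ : Fin n => Measure.pi fun _ : Fin m => gaussianReal 0 v)
      (f := fun i (z : Fin m → ℝ) => fun j => θ i j + z j)
      (hμ := fun j => by rw [h1]; infer_instance)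
      (fun i => (measurable_pi_lambda _ fun j => (measurable_pi_apply j).const_add _).aemeasurable)
  refine this.trans ?_
  congr 1; ext1 i
  exact h1 i

lemma gaussian_change (n m : ℕ) (v : ℝ≥0) (hv : v ≠ 0) (θ θ₀ : Matrix (Fin n) (Fin m) ℝ)
    {B : Set (Matrix (Fin n) (Fin m) ℝ)} (hB : MeasurableSet B) :
    ((gaussianMatrix n m v).map (fun Z => θ + Z)) B ≤
      ENNReal.ofReal (Real.exp ((∑ i, ∑ j, (θ i j - θ₀ i j) ^ 2) / v)) ^ (1 / 2 : ℝ) *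
      (((gaussianMatrix n m v).map (fun Z => θ₀ + Z)) B) ^ (1 / 2 : ℝ) := by
  rw [gaussianMatrix_map, gaussianMatrix_map]
  have hp : ∀ (θ : Matrix (Fin n) (Fin m) ℝ) (i : Fin n),
      IsProbabilityMeasure (Measure.pi fun j : Fin m => gaussianReal (θ i j) v) :=
    fun θ i => inferInstance
  have := hp θ
  have := hp θ₀
  have h := ChiB.pi' (fun i : Fin n => Measure.pi fun j : Fin m => gaussianReal (θ i j) v)
    (fun i : Fin n => Measure.pi fun j : Fin m => gaussianReal (θ₀ i j) v) _
    (fun i => ChiB.pi' (fun j : Fin m => gaussianReal (θ i j) v)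
      (fun j : Fin m => gaussianReal (θ₀ i j) v) _ (fun j => chiB_gaussianReal _ _ v hv))
  have h2 := h.measure_le hB
  have h3 : ENNReal.ofReal (Real.exp ((∑ i, ∑ j, (θ i j - θ₀ i j) ^ 2) / v)) =
      ∏ i, ∏ j, ENNReal.ofReal (Real.exp ((θ i j - θ₀ i j) ^ 2 / v)) := by
    simp_rw [Finset.sum_div, Real.exp_sum]
    rw [ENNReal.ofReal_prod_of_nonneg (fun _ _ => by positivity)]
    refine Finset.prod_congr rfl fun i _ => ?_
    rw [ENNReal.ofReal_prod_of_nonneg (fun _ _ => by positivity)]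
  rw [h3]
  exact h2

lemma l2norm_eq {I : Type*} [Fintype I] (v : I → ℝ) : l2norm v = ‖(WithLp.toLp 2 v : EuclideanSpace ℝ I)‖ := by
  rw [EuclideanSpace.norm_eq]; simp [l2norm]

lemma l2norm_nonneg {I : Type*} [Fintype I] (v : I → ℝ) : 0 ≤ l2norm v := Real.sqrt_nonneg _

lemma l2norm_sq {I : Type*} [Fintype I] (v : I → ℝ) : l2norm v ^ 2 = v ⬝ᵥ v := by
  rw [l2norm, Real.sq_sqrt (Finset.sum_nonneg fun i _ => sq_nonneg _)]
  simp [dotProduct, sq]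

lemma l2norm_sq' {I : Type*} [Fintype I] (v : I → ℝ) : l2norm v ^ 2 = ∑ i, v i ^ 2 := by
  rw [l2norm, Real.sq_sqrt (Finset.sum_nonneg fun i _ => sq_nonneg _)]

lemma l2norm_smul {I : Type*} [Fintype I] (a : ℝ) (v : I → ℝ) : l2norm (a • v) = |a| * l2norm v := by
  rw [l2norm_eq, l2norm_eq, WithLp.toLp_smul, norm_smul, Real.norm_eq_abs]

lemma l2norm_add_le {I : Type*} [Fintype I] (v w : I → ℝ) : l2norm (v + w) ≤ l2norm v + l2norm w := by
  rw [l2norm_eq, l2norm_eq, l2norm_eq, WithLp.toLp_add]; exact norm_add_le _ _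

lemma l2norm_pos {I : Type*} [Fintype I] {v : I → ℝ} (h : v ≠ 0) : 0 < l2norm v := by
  rw [l2norm_eq, norm_pos_iff]
  intro h0; apply h
  simpa using h0

lemma dot_le_l2norm {I : Type*} [Fintype I] (v w : I → ℝ) : v ⬝ᵥ w ≤ l2norm v * l2norm w := by
  unfold dotProduct l2norm
  exact Real.sum_mul_le_sqrt_mul_sqrt _ _ _

lemma frobNorm_nonneg {I J : Type*} [Fintype I] [Fintype J] (M : Matrix I J ℝ) : 0 ≤ frobNorm M :=
  Real.sqrt_nonneg _

lemma frobNorm_sq {I J : Type*} [Fintype I] [Fintype J] (M : Matrix I J ℝ) :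
    frobNorm M ^ 2 = ∑ i, ∑ j, M i j ^ 2 :=
  Real.sq_sqrt (Finset.sum_nonneg fun _ _ => Finset.sum_nonneg fun _ _ => sq_nonneg _)

lemma l2norm_mulVec_le {I J : Type*} [Fintype I] [Fintype J] (M : Matrix I J ℝ) (v : J → ℝ) :
    l2norm (M *ᵥ v) ≤ frobNorm M * l2norm v := by
  apply le_of_sq_le_sq _ (mul_nonneg (frobNorm_nonneg _) (l2norm_nonneg _))
  rw [mul_pow, l2norm_sq', l2norm_sq', frobNorm_sq, Finset.sum_mul]
  refine Finset.sum_le_sum fun i _ => ?_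
  exact Finset.sum_mul_sq_le_sq_mul_sq _ _ _

lemma sv_inf_le {I J : Type*} [Fintype I] [Fintype J] (M : Matrix I J ℝ) (t : ℝ) (ht : 0 ≤ t)
    (h : ∀ v, l2norm (M *ᵥ v) ≤ t * l2norm v) (V : Submodule ℝ (J → ℝ)) :
    sInf { u | ∃ v ∈ V, l2norm v = 1 ∧ u = l2norm (M.mulVec v) } ≤ t := by
  by_cases hne : { u | ∃ v ∈ V, l2norm v = 1 ∧ u = l2norm (M.mulVec v) }.Nonempty
  · obtain ⟨u, v, hv, h1, rfl⟩ := hne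
    have hb : BddBelow { u | ∃ v ∈ V, l2norm v = 1 ∧ u = l2norm (M.mulVec v) } := by
      refine ⟨0, ?_⟩
      rintro u ⟨v, -, -, rfl⟩; exact l2norm_nonneg _
    refine (csInf_le hb ⟨v, hv, h1, rfl⟩).trans ?_
    · have := h v; rwa [h1, mul_one] at this
  · rw [Set.not_nonempty_iff_eq_empty.mp hne, Real.sInf_empty]; exact ht

lemma sv_le {I J : Type*} [Fintype I] [Fintype J] (M : Matrix I J ℝ) (t : ℝ) (ht : 0 ≤ t) (j : ℕ)
    (h : ∀ v, l2norm (M *ᵥ v) ≤ t * l2norm v) : singularValue M j ≤ t := by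
  refine Real.sSup_le ?_ ht
  rintro u ⟨V, -, rfl⟩
  exact sv_inf_le M t ht h V

lemma sv_nonneg {I J : Type*} [Fintype I] [Fintype J] (M : Matrix I J ℝ) (j : ℕ) :
    0 ≤ singularValue M j := by
  refine Real.sSup_nonneg ?_
  rintro u ⟨V, -, rfl⟩
  refine Real.sInf_nonneg ?_
  rintro u ⟨v, -, -, rfl⟩; exact l2norm_nonneg _

lemma le_sv {I J : Type*} [Fintype I] [Fintype J] (M : Matrix I J ℝ) (t : ℝ) (j : ℕ) (hj : 1 ≤ j)
    (V : Submodule ℝ (J → ℝ)) (hV : Module.finrank ℝ V = j)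
    (h : ∀ v ∈ V, t * l2norm v ≤ l2norm (M *ᵥ v)) : t ≤ singularValue M j := by
  have h1 : t ≤ sInf { u | ∃ v ∈ V, l2norm v = 1 ∧ u = l2norm (M.mulVec v) } := by
    apply le_csInf
    · have hnb : V ≠ ⊥ := by
        rintro rfl; rw [finrank_bot] at hV; omega
      obtain ⟨v, hv, hv0⟩ := Submodule.exists_mem_ne_zero_of_ne_bot hnb
      refine ⟨_, (l2norm v)⁻¹ • v, V.smul_mem _ hv, ?_, rfl⟩
      have := l2norm_pos hv0
      rw [l2norm_smul, abs_of_pos (by positivity)]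
      field_simp
    · rintro u ⟨v, hv, h1, rfl⟩
      have := h v hv; rwa [h1, mul_one] at this
  refine h1.trans (le_csSup ⟨frobNorm M, ?_⟩ ⟨V, hV, rfl⟩)
  rintro u ⟨V, -, rfl⟩
  exact sv_inf_le M _ (frobNorm_nonneg _) (l2norm_mulVec_le M) V

lemma le_sv_map {I J K : Type*} [Fintype I] [Fintype J] [AddCommGroup K] [Module ℝ K]
    (M : Matrix I J ℝ) (t : ℝ) (ht : 0 < t) (j : ℕ)
    (hj : 1 ≤ j) (W : Submodule ℝ K) (hW : Module.finrank ℝ W = j) (f : K →ₗ[ℝ] (J → ℝ)) (g : K → ℝ)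
    (hg : ∀ w, w ≠ 0 → 0 < g w) (hf : ∀ w, l2norm (f w) ≤ g w)
    (h : ∀ w ∈ W, t * g w ≤ l2norm (M *ᵥ f w)) : t ≤ singularValue M j := by
  refine le_sv M t j hj (LinearMap.range (f.domRestrict W)) ?_ ?_
  · rw [LinearMap.finrank_range_of_inj, hW]
    rw [← LinearMap.ker_eq_bot, LinearMap.ker_eq_bot']
    rintro ⟨w, hw⟩ h0
    by_contra hne
    have hw0 : w ≠ 0 := fun h => hne (by simpa using h)
    have h1 := h w hw
    have h2 : f w = 0 := h0
    rw [h2, Matrix.mulVec_zero] at h1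
    have h3 : l2norm (0 : I → ℝ) = 0 := by simp [l2norm]
    rw [h3] at h1
    have := mul_pos ht (hg w hw0)
    linarith
  · rintro v ⟨⟨w, hw⟩, rfl⟩
    exact le_trans (by have := hf w; gcongr; exact this) (h w hw)

lemma kyFan {p m k : ℕ} (M : Matrix (Fin p) (Fin m) ℝ) (X : Matrix (Fin p) (Fin k) ℝ)
    (Y : Matrix (Fin m) (Fin k) ℝ) (hX : ∀ z, l2norm (Xᵀ *ᵥ z) ≤ l2norm z)
    (hY : ∀ w, l2norm (Y *ᵥ w) ≤ l2norm w) :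
    (Xᵀ * M * Y).trace ≤ ∑ i ∈ Finset.Icc 1 k, singularValue M i := by
  set N := Xᵀ * M * Y with hN
  let E := EuclideanSpace ℝ (Fin k)
  let T : E →ₗ[ℝ] E := Matrix.toEuclideanLin N
  have hT : ∀ w : E, ‖T w‖ = l2norm (N *ᵥ w.ofLp) := fun w => by
    rw [l2norm_eq]; rfl
  have hS := LinearMap.isSymmetric_adjoint_comp_self T
  have hfr : Module.finrank ℝ E = k := by simp [E]
  let b := hS.eigenvectorBasis hfr
  let lam := hS.eigenvalues hfr
  have hlam : Antitone lam := hS.eigenvalues_antitone hfr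
  have hb : ∀ i, (LinearMap.adjoint T ∘ₗ T) (b i) = lam i • b i := fun i =>
    hS.apply_eigenvectorBasis hfr i
  have hnorm : ∀ w : E, ‖T w‖ ^ 2 = ∑ j, lam j * (inner ℝ (b j) w) ^ 2 := by
    intro w
    have h1 : ‖T w‖ ^ 2 = inner ℝ w ((LinearMap.adjoint T ∘ₗ T) w) := by
      rw [LinearMap.comp_apply, LinearMap.adjoint_inner_right, real_inner_self_eq_norm_sq]
    rw [h1, ← b.sum_inner_mul_inner]
    refine Finset.sum_congr rfl fun j _ => ?_
    rw [← hS (b j) w, hb, inner_smul_left, real_inner_comm]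
    simp; ring
  have hbn : ∀ i, ‖T (b i)‖ ^ 2 = lam i := by
    intro i
    rw [hnorm, Finset.sum_eq_single i]
    · simp
    · intro j _ hj
      rw [b.inner_eq_zero hj]; simp
    · simp
  have htr : N.trace = ∑ i, inner ℝ (b i) (T (b i)) := by
    rw [← LinearMap.trace_eq_sum_inner T b]
    have := LinearMap.trace_eq_matrix_trace ℝ (EuclideanSpace.basisFun (Fin k) ℝ).toBasis T
    rw [this]
    congr 1
    have h2 : T = Matrix.toLin (EuclideanSpace.basisFun (Fin k) ℝ).toBasis (EuclideanSpace.basisFun (Fin k) ℝ).toBasis N := by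
      simp only [T]; rw [Matrix.toEuclideanLin_eq_toLin_orthonormal]
    rw [h2, LinearMap.toMatrix_toLin]
  have key : ∀ i : Fin k, ‖T (b i)‖ ≤ singularValue M (i.1 + 1) := by
    intro i
    by_cases h0 : ‖T (b i)‖ = 0
    · rw [h0]; exact sv_nonneg _ _
    have hpos : 0 < ‖T (b i)‖ := lt_of_le_of_ne (norm_nonneg _) (Ne.symm h0)
    let fam : Fin (i.1 + 1) → E := fun j => b (Fin.castLE i.2 j)
    have hli : LinearIndependent ℝ fam :=
      b.orthonormal.linearIndependent.comp _ (Fin.castLE_injective i.2)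
    have hmem : ∀ w ∈ Submodule.span ℝ (Set.range fam), ∀ j, i < j → inner ℝ (b j) w = 0 := by
      intro w hw j hj
      have : Submodule.span ℝ (Set.range fam) ≤ LinearMap.ker (innerₛₗ ℝ (b j)) := by
        rw [Submodule.span_le]
        rintro _ ⟨l, rfl⟩
        have : j ≠ Fin.castLE i.2 l := by
          intro h
          have h3 : j.1 = l.1 := by rw [h]; rfl
          have h4 : i.1 < j.1 := hj
          omega
        simpa [fam] using b.inner_eq_zero this
      simpa using this hw
    refine le_sv_map M _ hpos (i.1 + 1) (by omega) (Submodule.span ℝ (Set.range fam)) ?_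
      (Y.mulVecLin ∘ₗ (WithLp.linearEquiv 2 ℝ (Fin k → ℝ)).toLinearMap) (fun w => ‖w‖)
      (fun w hw => norm_pos_iff.mpr hw) ?_ ?_
    · rw [finrank_span_eq_card hli, Fintype.card_fin]
    · intro w
      refine (hY _).trans (le_of_eq ?_)
      rw [l2norm_eq]; rfl
    · intro w hw
      have h1 : ‖T w‖ ≤ l2norm (M *ᵥ (Y *ᵥ w.ofLp)) := by
        rw [hT, hN, ← Matrix.mulVec_mulVec, ← Matrix.mulVec_mulVec]
        exact hX _
      refine le_trans ?_ h1
      apply le_of_sq_le_sq _ (norm_nonneg _)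
      rw [mul_pow, hnorm w, hbn i, ← b.sum_sq_norm_inner_right w, Finset.mul_sum]
      refine Finset.sum_le_sum fun j _ => ?_
      rw [Real.norm_eq_abs, sq_abs]
      by_cases hj : i < j
      · rw [hmem w hw j hj]; simp
      · exact mul_le_mul_of_nonneg_right (hlam (not_lt.mp hj)) (sq_nonneg _)
  rw [htr]
  calc ∑ i, inner ℝ (b i) (T (b i)) ≤ ∑ i : Fin k, singularValue M (i.1 + 1) := by
        refine Finset.sum_le_sum fun i _ => (real_inner_le_norm _ _).trans ?_
        rw [b.norm_eq_one, one_mul]; exact key i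
    _ = ∑ i ∈ Finset.Icc 1 k, singularValue M i := by
        rw [Fin.sum_univ_eq_sum_range (fun i => singularValue M (i + 1)) k, Finset.range_eq_Ico,
          Finset.sum_Ico_add' (fun i => singularValue M i) 0 k 1]
        rfl

lemma sum_sv_le_schatten {p m k : ℕ} (M : Matrix (Fin p) (Fin m) ℝ) (hk : 1 ≤ k) (hp : k ≤ p) (hm : k ≤ m)
    (q : ℝ) (hq : 1 ≤ q) :
    ∑ i ∈ Finset.Icc 1 k, singularValue M i ≤ (k : ℝ) ^ (1 - 1 / q) * schattenNorm M q := by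
  have hq0 : 0 < q := by linarith
  have hS : 0 ≤ ∑ i ∈ Finset.Icc 1 k, singularValue M i := Finset.sum_nonneg fun _ _ => sv_nonneg _ _
  have h1 := Real.rpow_sum_le_const_mul_sum_rpow (Finset.Icc 1 k) (singularValue M) hq
  simp only [abs_of_nonneg (sv_nonneg M _), Nat.card_Icc, Nat.add_sub_cancel] at h1
  have h2 : ∑ i ∈ Finset.Icc 1 k, singularValue M i ^ q ≤
      ∑ i ∈ Finset.Icc 1 (min (Fintype.card (Fin p)) (Fintype.card (Fin m))), singularValue M i ^ q := by
    apply Finset.sum_le_sum_of_subset_of_nonneg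
    · apply Finset.Icc_subset_Icc le_rfl
      simp [hp, hm]
    · intros; exact Real.rpow_nonneg (sv_nonneg _ _) _
  have hk0 : (0 : ℝ) ≤ (k : ℝ) ^ (q - 1) := by positivity
  have h3 := h1.trans (mul_le_mul_of_nonneg_left h2 hk0)
  have h4 := Real.rpow_le_rpow (by positivity) h3 (by positivity : 0 ≤ 1 / q)
  rw [← Real.rpow_mul hS, mul_one_div_cancel hq0.ne', Real.rpow_one,
    Real.mul_rpow hk0 (Finset.sum_nonneg fun _ _ => Real.rpow_nonneg (sv_nonneg _ _) _),
    ← Real.rpow_mul (by positivity)] at h4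
  refine h4.trans (le_of_eq ?_)
  unfold schattenNorm
  congr 2
  field_simp

lemma schattenNorm_nonneg {p m : ℕ} (M : Matrix (Fin p) (Fin m) ℝ) (q : ℝ) : 0 ≤ schattenNorm M q :=
  Real.rpow_nonneg (Finset.sum_nonneg fun _ _ => Real.rpow_nonneg (sv_nonneg _ _) _) _

/-- Matrix of an embedding of index sets. -/
def embM {α β : Type} [DecidableEq β] (e : α → β) : Matrix β α ℝ :=
  Matrix.of fun i a => if i = e a then 1 else 0

lemma embM_tmul {α β : Type} [Fintype β] [DecidableEq β] [DecidableEq α] (e : α → β)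
    (he : Function.Injective e) : (embM e)ᵀ * embM e = 1 := by
  ext a a'
  simp [embM, Matrix.mul_apply, Matrix.one_apply, he.eq_iff, eq_comm]

lemma embM_mulVec_norm {α β : Type} [Fintype β] [DecidableEq β] [DecidableEq α] [Fintype α] (e : α → β)
    (he : Function.Injective e) (w : α → ℝ) : l2norm (embM e *ᵥ w) = l2norm w := by
  apply (sq_eq_sq₀ (l2norm_nonneg _) (l2norm_nonneg _)).mp
  rw [l2norm_sq, l2norm_sq, Matrix.dotProduct_mulVec, ← Matrix.mulVec_transpose, Matrix.mulVec_mulVec,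
    embM_tmul e he, Matrix.one_mulVec]

lemma contr_transpose {α β : Type} [Fintype β] [Fintype α] (Y : Matrix β α ℝ)
    (h : ∀ w, l2norm (Y *ᵥ w) ≤ l2norm w) (z : β → ℝ) : l2norm (Yᵀ *ᵥ z) ≤ l2norm z := by
  by_contra! hlt
  have h1 : l2norm (Yᵀ *ᵥ z) ^ 2 ≤ l2norm z * l2norm (Yᵀ *ᵥ z) := by
    rw [l2norm_sq, Matrix.dotProduct_mulVec, ← Matrix.mulVec_transpose, Matrix.transpose_transpose,
      dotProduct_comm]
    exact (dot_le_l2norm _ _).trans (mul_le_mul_of_nonneg_left (h _) (l2norm_nonneg _))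
  have h2 := l2norm_nonneg z
  nlinarith

/-- Base matrix. -/
def baseJ {p m r : ℕ} (hp : r ≤ p) (hm : r ≤ m) : Matrix (Fin p) (Fin m) ℝ :=
  embM (Fin.castLE hp) * (embM (Fin.castLE hm))ᵀ

lemma baseJ_mulVec_le {p m r : ℕ} (hp : r ≤ p) (hm : r ≤ m) (v : Fin m → ℝ) :
    l2norm (baseJ hp hm *ᵥ v) ≤ l2norm v := by
  rw [baseJ, ← Matrix.mulVec_mulVec, embM_mulVec_norm _ (Fin.castLE_injective hp)]
  exact contr_transpose _ (fun w => (embM_mulVec_norm _ (Fin.castLE_injective hm) w).le) v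

lemma baseJ_mulVec_emb {p m r : ℕ} (hp : r ≤ p) (hm : r ≤ m) (w : Fin r → ℝ) :
    l2norm (baseJ hp hm *ᵥ (embM (Fin.castLE hm) *ᵥ w)) = l2norm w := by
  rw [baseJ, Matrix.mulVec_mulVec, Matrix.mul_assoc, embM_tmul _ (Fin.castLE_injective hm), Matrix.mul_one,
    embM_mulVec_norm _ (Fin.castLE_injective hp)]

/-- Entrywise inner product of matrices. -/
def mip {I J : Type} [Fintype I] [Fintype J] (M W : Matrix I J ℝ) : ℝ := ∑ i, ∑ j, M i j * W i j

lemma mip_eq_trace {I J : Type} [Fintype I] [Fintype J] (M W : Matrix I J ℝ) :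
    mip M W = (M * Wᵀ).trace := by
  simp [mip, Matrix.trace, Matrix.mul_apply]

lemma mip_sub {I J : Type} [Fintype I] [Fintype J] (M N W : Matrix I J ℝ) :
    mip (M - N) W = mip M W - mip N W := by
  simp [mip, sub_mul, Finset.sum_sub_distrib]

lemma mip_smul {I J : Type} [Fintype I] [Fintype J] (a : ℝ) (M W : Matrix I J ℝ) :
    mip (a • M) W = a * mip M W := by
  simp [mip, Finset.mul_sum, mul_assoc]

/-- Test matrices controlled by the first `r` singular values. -/
def GoodW {p m : ℕ} (r : ℕ) (W : Matrix (Fin p) (Fin m) ℝ) : Prop :=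
  ∀ M : Matrix (Fin p) (Fin m) ℝ, |mip M W| ≤ ∑ i ∈ Finset.Icc 1 r, singularValue M i

lemma goodW_of {p m r : ℕ} (X : Matrix (Fin p) (Fin r) ℝ)
    (Y : Matrix (Fin m) (Fin r) ℝ) (hX : ∀ z, l2norm (Xᵀ *ᵥ z) ≤ l2norm z)
    (hY : ∀ w, l2norm (Y *ᵥ w) ≤ l2norm w) : GoodW r (X * Yᵀ) := by
  intro M
  have e : mip M (X * Yᵀ) = (Xᵀ * M * Y).trace := by
    rw [mip_eq_trace, Matrix.transpose_mul, Matrix.transpose_transpose, ← Matrix.mul_assoc,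
      Matrix.trace_mul_comm, Matrix.mul_assoc]
  rw [e]
  have h1 := kyFan M X Y hX hY
  have h2 := kyFan M (-X) Y (fun z => by
    have h := l2norm_smul (-1) (Xᵀ *ᵥ z)
    simp only [neg_smul, one_smul, abs_neg, abs_one, one_mul] at h
    rw [Matrix.transpose_neg, Matrix.neg_mulVec, h]; exact hX z) hY
  rw [Matrix.transpose_neg, Matrix.neg_mul, Matrix.neg_mul, Matrix.trace_neg] at h2
  exact abs_le.mpr ⟨by linarith, h1⟩

lemma goodW_zero {p m r : ℕ} : GoodW r (0 : Matrix (Fin p) (Fin m) ℝ) := by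
  intro M
  simp only [mip, Matrix.zero_apply, mul_zero, Finset.sum_const_zero, abs_zero]
  exact Finset.sum_nonneg fun _ _ => sv_nonneg _ _

lemma memTheta_of {p m r s : ℕ} (hr : 1 ≤ r) (hp : r ≤ p) (hm : r ≤ m) (d γ a e : ℝ) (hd : 0 < d) (hγ : 1 < γ)
    (F : Matrix (Fin p) (Fin m) ℝ) (hF : frobNorm F ≤ 1) (he : 0 ≤ e) (he' : e ≤ (γ - 1) / 4 * d)
    (ha : a = (1 + γ) / 2 * d)
    (hrank : (a • baseJ hp hm + e • F).rank ≤ r)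
    (S : Finset (Fin p)) (hS : S.card ≤ s) (hS' : ∀ l, l ∉ S → ∀ j, (baseJ hp hm) l j = 0 ∧ F l j = 0) :
    memTheta (a • baseJ hp hm + e • F) s r d γ := by
  have hapos : 0 < a := by rw [ha]; have : 0 < 1 + γ := by linarith
                           positivity
  have hFv : ∀ v, l2norm (F *ᵥ v) ≤ l2norm v := fun v => (l2norm_mulVec_le F v).trans
    (mul_le_of_le_one_left (l2norm_nonneg _) hF)
  have hup : ∀ v, l2norm ((a • baseJ hp hm + e • F) *ᵥ v) ≤ (a + e) * l2norm v := by
    intro v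
    rw [Matrix.add_mulVec, Matrix.smul_mulVec, Matrix.smul_mulVec]
    refine (l2norm_add_le _ _).trans ?_
    rw [l2norm_smul, l2norm_smul, abs_of_pos hapos, abs_of_nonneg he, add_mul]
    have := hFv v
    have := baseJ_mulVec_le hp hm v
    gcongr
  have hlow : ∀ w : Fin r → ℝ, (a - e) * l2norm w ≤
      l2norm ((a • baseJ hp hm + e • F) *ᵥ (embM (Fin.castLE hm) *ᵥ w)) := by
    intro w
    set u := embM (Fin.castLE hm) *ᵥ w with hu
    have h1 : l2norm (a • (baseJ hp hm *ᵥ u)) ≤ l2norm ((a • baseJ hp hm + e • F) *ᵥ u)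
        + l2norm ((-e) • (F *ᵥ u)) := by
      refine le_trans (le_of_eq ?_) (l2norm_add_le _ _)
      congr 1
      rw [Matrix.add_mulVec, Matrix.smul_mulVec, Matrix.smul_mulVec]
      simp
    rw [l2norm_smul, l2norm_smul, abs_neg, abs_of_pos hapos, abs_of_nonneg he, hu, baseJ_mulVec_emb, ← hu] at h1
    have h2 := hFv u
    have h3 : l2norm u = l2norm w := embM_mulVec_norm _ (Fin.castLE_injective hm) w
    rw [h3] at h2
    have := mul_le_mul_of_nonneg_left h2 he
    linarith
  have hgap : d < a - e := by rw [ha]; nlinarith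
  have hpos : 0 < a - e := by linarith
  refine ⟨?_, hd, ?_, ?_, ?_⟩
  · apply le_antisymm hrank
    have hinj : Function.Injective ((a • baseJ hp hm + e • F) * embM (Fin.castLE hm)).mulVecLin := by
      rw [← LinearMap.ker_eq_bot, LinearMap.ker_eq_bot']
      intro w hw
      by_contra hne
      have h1 := hlow w
      rw [Matrix.mulVec_mulVec] at h1
      rw [Matrix.mulVecLin_apply] at hw
      rw [hw] at h1
      have h3 : l2norm (0 : Fin p → ℝ) = 0 := by simp [l2norm]
      rw [h3] at h1
      have := mul_pos hpos (l2norm_pos hne)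
      linarith
    have h2 : ((a • baseJ hp hm + e • F) * embM (Fin.castLE hm)).rank = r := by
      rw [Matrix.rank, LinearMap.finrank_range_of_inj hinj]; simp
    calc r = _ := h2.symm
      _ ≤ _ := Matrix.rank_mul_le_left _ _
  · refine (sv_le _ (a + e) (by linarith) 1 hup).trans ?_
    rw [ha]; nlinarith
  · refine lt_of_lt_of_le hgap ?_
    refine le_sv_map _ (a - e) hpos r hr (⊤ : Submodule ℝ (Fin r → ℝ)) (by simp)
      (embM (Fin.castLE hm)).mulVecLin l2norm (fun w hw => l2norm_pos hw)
      (fun w => (embM_mulVec_norm _ (Fin.castLE_injective hm) w).le) (fun w _ => hlow w)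
  · refine le_trans (Finset.card_le_card ?_) hS
    intro l hl
    by_contra hlS
    simp only [rowSupport, Finset.mem_filter, Finset.mem_univ, true_and] at hl
    apply hl
    ext j
    simp [hS' l hlS j]

lemma riesz_le {n p : ℕ} (X : Matrix (Fin n) (Fin p) ℝ) (k : ℕ) (hk : k ≤ p) (S : Finset (Fin p)) (hS : S.card ≤ k)
    (v : Fin p → ℝ) (hv : ∀ i, i ∉ S → v i = 0) :
    l2norm (X *ᵥ v) ^ 2 ≤ kappaPlus X k ^ 2 * l2norm v ^ 2 := by
  by_cases h0 : v = 0
  · subst h0; simp [l2norm]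
  have hpos := l2norm_pos h0
  obtain ⟨B, hSB, hB⟩ := Finset.exists_superset_card_eq hS (by simpa using hk)
  have h1 : l2norm (X *ᵥ ((l2norm v)⁻¹ • v)) ^ 2 ≤ kappaPlusSq X k := by
    apply le_csSup
    · refine ⟨frobNorm X ^ 2, ?_⟩
      rintro t ⟨B, -, w, -, hw, rfl⟩
      have := l2norm_mulVec_le X w
      rw [hw, mul_one] at this
      exact pow_le_pow_left₀ (l2norm_nonneg _) this 2
    · refine ⟨B, hB, _, ?_, ?_, rfl⟩
      · intro i hi
        simp [hv i (fun h => hi (hSB h))]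
      · rw [l2norm_smul, abs_of_pos (by positivity)]
        field_simp
  have h2 : kappaPlusSq X k = kappaPlus X k ^ 2 := by
    rw [kappaPlus, Real.sq_sqrt]
    exact le_trans (sq_nonneg _) h1
  rw [h2, Matrix.mulVec_smul, l2norm_smul, abs_of_pos (by positivity), mul_pow, inv_pow,
    inv_mul_le_iff₀ (by positivity)] at h1
  linarith

lemma two_s_le {n p k : ℕ} (X : Matrix (Fin n) (Fin p) ℝ) (K : ℝ) (hK : 1 < K) (h : K⁻¹ ≤ kappaMinus X k) : k ≤ p := by
  by_contra! hlt
  have : kappaMinus X k = 0 := by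
    have h1 : { t | ∃ B : Finset (Fin p), B.card = k ∧ ∃ v : Fin p → ℝ,
      (∀ i, i ∉ B → v i = 0) ∧ l2norm v = 1 ∧ t = l2norm (X.mulVec v) ^ 2 } = ∅ := by
      rw [Set.eq_empty_iff_forall_notMem]
      rintro t ⟨B, hB, -⟩
      have := B.card_le_univ
      simp at this; omega
    rw [kappaMinus, kappaMinusSq, h1]; simp
  rw [this] at h
  have : 0 < K⁻¹ := by positivity
  linarith

/-- A finite configuration of perturbations, well separated in the dual sense. -/
def Config (p m s r : ℕ) (hp : r ≤ p) (hm : r ≤ m) (lam c1 : ℝ) : Prop :=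
  ∃ (ι : Type) (_ : Fintype ι) (F : ι → Matrix (Fin p) (Fin m) ℝ) (G : Finset ι),
    G.Nonempty ∧ Real.log 2 ≤ lam ∧ (∀ i, frobNorm (F i) ≤ 1) ∧
    (∀ i, (∀ a b : ℝ, (a • baseJ hp hm + b • F i).rank ≤ r) ∧
      ∃ S : Finset (Fin p), S.card ≤ s ∧ ∀ l, l ∉ S → ∀ j, (baseJ hp hm) l j = 0 ∧ F i l j = 0) ∧
    (∀ i ∈ G, ∀ H : Finset ι, H ⊆ G →
      (∀ j ∈ H, ¬ ∃ W, GoodW r W ∧ c1 * Real.sqrt r ≤ mip (F i - F j) W) →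
      (H.card : ℝ) * Real.exp (lam / 8) ≤ G.card)

lemma testing {Ω ι : Type} [MeasurableSpace Ω] (Q : Measure Ω) [IsProbabilityMeasure Q]
    (G : Finset ι) (hG : G.Nonempty) (B : ι → Set Ω) (hB : ∀ i, MeasurableSet (B i)) (t : ℝ) (ht : 0 ≤ t)
    (h : ∀ ω, ∀ H ⊆ G, (∀ i ∈ H, ω ∈ B i) → (H.card : ℝ) ≤ G.card * t) :
    ∃ i ∈ G, Q (B i) ≤ ENNReal.ofReal t := by
  classical
  by_contra! hcon
  have hsum : ∑ i ∈ G, Q (B i) ≤ ENNReal.ofReal (G.card * t) := by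
    calc ∑ i ∈ G, Q (B i) = ∑ i ∈ G, ∫⁻ ω, (B i).indicator 1 ω ∂Q := by
          refine Finset.sum_congr rfl fun i _ => (lintegral_indicator_one (hB i)).symm
      _ = ∫⁻ ω, ∑ i ∈ G, (B i).indicator 1 ω ∂Q := by
          rw [lintegral_finset_sum _ fun i _ => measurable_one.indicator (hB i)]
      _ ≤ ∫⁻ _, ENNReal.ofReal (G.card * t) ∂Q := by
          refine lintegral_mono fun ω => ?_
          have h1 : ∑ i ∈ G, (B i).indicator (1 : Ω → ℝ≥0∞) ω = ((G.filter fun i => ω ∈ B i).card : ℝ≥0∞) := by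
            rw [Finset.card_filter]
            push_cast
            refine Finset.sum_congr rfl fun i _ => ?_
            by_cases hx : ω ∈ B i <;> simp [hx]
          have h2 := h ω (G.filter fun i => ω ∈ B i) (Finset.filter_subset _ _)
            (fun i hi => (Finset.mem_filter.mp hi).2)
          simp only [h1]
          rw [← ENNReal.ofReal_natCast]
          exact ENNReal.ofReal_le_ofReal h2
      _ = _ := by simp
  have h3 : (∑ i ∈ G, Q (B i)).toReal ≤ G.card * t := by
    refine ENNReal.toReal_le_of_le_ofReal (by positivity) hsum
  rw [ENNReal.toReal_sum (fun i _ => measure_ne_top _ _)] at h3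
  have h4 : ∑ i ∈ G, t < ∑ i ∈ G, (Q (B i)).toReal := by
    refine Finset.sum_lt_sum_of_nonempty hG fun i hi => ?_
    exact (ENNReal.ofReal_lt_iff_lt_toReal ht (measure_ne_top _ _)).mp (hcon i hi)
  simp at h4
  linarith

lemma exp_bound (lam : ℝ) (h : Real.log 2 ≤ lam) : Real.exp (-lam / 32) ≤ 49 / 50 := by
  have h1 : Real.exp (-lam / 32) ≤ Real.exp (-Real.log 2 / 32) := Real.exp_le_exp.mpr (by linarith)
  refine h1.trans ?_
  refine le_of_pow_le_pow_left₀ (n := 32) (by norm_num) (by norm_num) ?_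
  rw [← Real.exp_nat_mul]
  have : ((32 : ℕ) : ℝ) * (-Real.log 2 / 32) = -Real.log 2 := by push_cast; ring
  rw [this, Real.exp_neg, Real.exp_log (by norm_num)]
  norm_num

lemma risk_of_config {n m p s r : ℕ} (hr : 1 ≤ r) (hp : r ≤ p) (hm : r ≤ m) (hs : 2 * s ≤ p) (lam c1 : ℝ)
    (hc1 : 0 < c1)
    (hC : Config p m s r hp hm lam c1) (γ b d σ : ℝ) (hγ : 1 < γ) (hb : 0 < b) (hd : 0 < d) (hσ : 0 < σ)
    (X : Matrix (Fin n) (Fin p) ℝ) (hX : kappaPlus X (2 * s) = b) (q : ℝ) (hq : 1 ≤ q)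
    (Ahat : Matrix (Fin n) (Fin m) ℝ → Matrix (Fin p) (Fin m) ℝ) (hA : Measurable Ahat) (T : ℝ) (hT : 0 ≤ T)
    (hT1 : T ≤ ((γ - 1) / 4 * d) ^ 2) (hT2 : b ^ 2 * T ≤ σ ^ 2 * (lam / 16)) :
    ENNReal.ofReal (c1 ^ 2 / 200 * ((r : ℝ) ^ (2 / q - 1) * T)) ≤
        ⨆ A ∈ {A : Matrix (Fin p) (Fin m) ℝ | memTheta A s r d γ},
          ∫⁻ Y, ENNReal.ofReal (schattenNorm (Ahat Y - A) q ^ 2)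
            ∂((gaussianMatrix n m (Real.toNNReal (σ ^ 2))).map (fun Z => X * A + Z)) := by
  classical
  obtain ⟨ι, _, F, G, hG, hlam, hF, hFs, hsep⟩ := hC
  have hlam0 : 0 < lam := lt_of_lt_of_le (Real.log_pos (by norm_num)) hlam
  set v := Real.toNNReal (σ ^ 2) with hv
  have hv0 : v ≠ 0 := by rw [hv]; simp; positivity
  have hvr : (v : ℝ) = σ ^ 2 := Real.coe_toNNReal _ (by positivity)
  set a := (1 + γ) / 2 * d with ha
  set e := Real.sqrt T with he
  have he0 : 0 ≤ e := Real.sqrt_nonneg _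
  have hesq : e ^ 2 = T := Real.sq_sqrt hT
  have heγ : e ≤ (γ - 1) / 4 * d :=
    Real.sqrt_le_iff.mpr ⟨by have : 0 < γ - 1 := by linarith
                             positivity, hT1⟩
  set J := baseJ hp hm with hJ
  let A : ι → Matrix (Fin p) (Fin m) ℝ := fun i => a • J + e • F i
  have hAmem : ∀ i, memTheta (A i) s r d γ := by
    intro i
    obtain ⟨hrk, S, hS, hS'⟩ := hFs i
    exact memTheta_of hr hp hm d γ a e hd hγ (F i) (hF i) he0 heγ ha (hrk a e) S hS hS'
  let W : ι → ι → Matrix (Fin p) (Fin m) ℝ := fun i j =>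
    if h : ∃ W, GoodW r W ∧ c1 * Real.sqrt r ≤ mip (F i - F j) W then h.choose else 0
  have hW : ∀ i j, GoodW r (W i j) := by
    intro i j
    by_cases h : ∃ W, GoodW r W ∧ c1 * Real.sqrt r ≤ mip (F i - F j) W
    · simp only [W, h, dif_pos]; exact h.choose_spec.1
    · simp only [W, h, dif_neg, not_false_eq_true]; exact goodW_zero
  have hW2 : ∀ i j, (∃ W, GoodW r W ∧ c1 * Real.sqrt r ≤ mip (F i - F j) W) →
      c1 * Real.sqrt r ≤ mip (F i - F j) (W i j) := by
    intro i j h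
    simp only [W, h, dif_pos]; exact h.choose_spec.2
  set δ := c1 * Real.sqrt r * e / 2 with hδ
  let B : ι → Set (Matrix (Fin n) (Fin m) ℝ) := fun i => ⋂ k, ⋂ l, {Y | |mip (Ahat Y - A i) (W k l)| < δ}
  have hBm : ∀ i, MeasurableSet (B i) := by
    intro i
    refine MeasurableSet.iInter fun k => MeasurableSet.iInter fun l => ?_
    refine measurableSet_lt ?_ measurable_const
    refine Measurable.abs ?_
    unfold mip
    refine Finset.measurable_sum _ fun x _ => Finset.measurable_sum _ fun y _ => ?_
    refine Measurable.mul_const ?_ _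
    have h1 : Measurable fun Y => Ahat Y x y := by
      have h2 : Measurable fun M : Fin p → Fin m → ℝ => M x y :=
        (measurable_pi_apply y).comp (measurable_pi_apply x)
      exact h2.comp hA
    exact h1.sub_const _
  let P : ι → Measure (Matrix (Fin n) (Fin m) ℝ) := fun i => (gaussianMatrix n m v).map (fun Z => X * A i + Z)
  let Q : Measure (Matrix (Fin n) (Fin m) ℝ) := (gaussianMatrix n m v).map (fun Z => X * (a • J) + Z)
  have hprob : ∀ θ : Matrix (Fin n) (Fin m) ℝ,
      IsProbabilityMeasure ((gaussianMatrix n m v).map (fun Z => θ + Z)) := by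
    intro θ
    rw [gaussianMatrix_map]
    have : ∀ (i : Fin n),
        IsProbabilityMeasure (Measure.pi fun j : Fin m => gaussianReal (θ i j) v) := fun i => inferInstance
    exact (inferInstance : IsProbabilityMeasure (Measure.pi fun i : Fin n => Measure.pi fun j : Fin m => gaussianReal (θ i j) v))
  have hQp : IsProbabilityMeasure Q := hprob _
  have hPp : ∀ i, IsProbabilityMeasure (P i) := fun i => hprob _
  obtain ⟨i, hiG, hi⟩ := testing Q G hG B hBm (Real.exp (-lam / 8)) (Real.exp_pos _).le (by
    intro ω H hHG hH
    rcases H.eq_empty_or_nonempty with rfl | ⟨i0, hi0⟩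
    · simp; positivity
    have h1 := hsep i0 (hHG hi0) H hHG (by
      intro j hj hex
      have h2 := hW2 i0 j hex
      have h3 := hH i0 hi0
      have h4 := hH j hj
      simp only [B, mem_iInter, mem_setOf_eq] at h3 h4
      have h5 := (abs_lt.mp (h3 i0 j))
      have h6 := (abs_lt.mp (h4 i0 j))
      have h7 : A i0 - A j = e • (F i0 - F j) := by
        simp only [A]; rw [smul_sub]; abel
      have h8 : mip (A i0 - A j) (W i0 j) = mip (Ahat ω - A j) (W i0 j) - mip (Ahat ω - A i0) (W i0 j) := by
        rw [mip_sub, mip_sub, mip_sub]; ring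
      rw [h7, mip_smul] at h8
      have h9 := mul_le_mul_of_nonneg_left h2 he0
      have h10 : 2 * δ = e * (c1 * Real.sqrt r) := by rw [hδ]; ring
      linarith [h5.1, h6.2])
    have h2 : Real.exp (-lam / 8) = (Real.exp (lam / 8))⁻¹ := by rw [← Real.exp_neg]; congr 1; ring
    rw [h2, ← div_eq_mul_inv, le_div_iff₀ (Real.exp_pos _)]
    exact h1)
  -- change of measure
  have hPB : P i (B i) ≤ ENNReal.ofReal (49 / 50) := by
    have h1 := gaussian_change n m v hv0 (X * A i) (X * (a • J)) (hBm i)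
    refine h1.trans ?_
    have h2 : (∑ k, ∑ j, ((X * A i) k j - (X * (a • J)) k j) ^ 2) / (v : ℝ) ≤ lam / 16 := by
      rw [hvr, div_le_iff₀ (by positivity), Finset.sum_comm]
      obtain ⟨hrk, S, hS, hS'⟩ := hFs i
      have h3 : ∀ j, ∑ k, ((X * A i) k j - (X * (a • J)) k j) ^ 2 ≤ b ^ 2 * T * ∑ l, F i l j ^ 2 := by
        intro j
        have h4 : ∀ k, (X * A i) k j - (X * (a • J)) k j = (X *ᵥ (e • fun l => F i l j)) k := by
          intro k
          rw [← Matrix.sub_apply, ← Matrix.mul_sub]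
          simp [A, Matrix.mul_apply, Matrix.mulVec, dotProduct]
        simp_rw [h4]
        rw [← l2norm_sq', Matrix.mulVec_smul, l2norm_smul, mul_pow, sq_abs, hesq, ← l2norm_sq']
        have := riesz_le X (2 * s) hs S (by omega) (fun l => F i l j) (fun l hl => (hS' l hl j).2)
        rw [hX] at this
        have := mul_le_mul_of_nonneg_left this hT
        linarith
      refine (Finset.sum_le_sum fun j _ => h3 j).trans ?_
      rw [← Finset.mul_sum, Finset.sum_comm, ← frobNorm_sq]
      have h5 : frobNorm (F i) ^ 2 ≤ 1 := pow_le_one₀ (frobNorm_nonneg _) (hF i)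
      have : b ^ 2 * T * frobNorm (F i) ^ 2 ≤ b ^ 2 * T := mul_le_of_le_one_right (by positivity) h5
      linarith
    calc _ ≤ ENNReal.ofReal (Real.exp (lam / 16)) ^ (1 / 2 : ℝ) * ENNReal.ofReal (Real.exp (-lam / 8)) ^ (1 / 2 : ℝ) := by
          gcongr
      _ = ENNReal.ofReal (Real.exp (-lam / 32)) := by
          rw [ENNReal.ofReal_rpow_of_nonneg (by positivity) (by norm_num),
            ENNReal.ofReal_rpow_of_nonneg (by positivity) (by norm_num), ← ENNReal.ofReal_mul (by positivity),
            ← Real.exp_mul, ← Real.exp_mul, ← Real.exp_add]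
          congr 2; ring
      _ ≤ _ := ENNReal.ofReal_le_ofReal (exp_bound lam hlam)
  have hPc : ENNReal.ofReal (1 / 50) ≤ P i (B i)ᶜ := by
    rw [prob_compl_eq_one_sub (hBm i)]
    refine le_trans ?_ (tsub_le_tsub_left hPB 1)
    rw [← ENNReal.ofReal_one, ← ENNReal.ofReal_sub _ (by norm_num)]
    norm_num
  refine le_trans ?_ (le_iSup₂ (f := fun A (_ : A ∈ {A : Matrix (Fin p) (Fin m) ℝ | memTheta A s r d γ}) =>
    ∫⁻ Y, ENNReal.ofReal (schattenNorm (Ahat Y - A) q ^ 2)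
            ∂((gaussianMatrix n m v).map (fun Z => X * A + Z))) (A i) (hAmem i))
  set R := c1 ^ 2 / 4 * ((r : ℝ) ^ (2 / q - 1) * T) with hR
  have hr0 : (0 : ℝ) < r := by exact_mod_cast hr
  have hpt : ∀ Y, (B i)ᶜ.indicator (fun _ => ENNReal.ofReal R) Y ≤
      ENNReal.ofReal (schattenNorm (Ahat Y - A i) q ^ 2) := by
    intro Y
    by_cases hY : Y ∈ (B i)ᶜ
    · rw [Set.indicator_of_mem hY]
      apply ENNReal.ofReal_le_ofReal
      simp only [B, mem_compl_iff, mem_iInter, mem_setOf_eq, not_forall, not_lt] at hY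
      obtain ⟨k, l, hkl⟩ := hY
      have h1 := hkl.trans ((hW k l _).trans (sum_sv_le_schatten (Ahat Y - A i) hr hp hm q hq))
      have hδ0 : 0 ≤ δ := by positivity
      have h2 := pow_le_pow_left₀ hδ0 h1 2
      rw [mul_pow, ← Real.rpow_natCast ((r : ℝ) ^ (1 - 1 / q)) 2, ← Real.rpow_mul hr0.le] at h2
      have hpos : 0 < (r : ℝ) ^ ((1 - 1 / q) * ((2 : ℕ) : ℝ)) := Real.rpow_pos_of_pos hr0 _
      refine le_of_mul_le_mul_left (le_trans (le_of_eq ?_) h2) hpos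
      rw [hR, hδ, div_pow, mul_pow, mul_pow, Real.sq_sqrt hr0.le, hesq]
      have h3 : (r : ℝ) ^ ((1 - 1 / q) * ((2 : ℕ) : ℝ)) * (r : ℝ) ^ (2 / q - 1) = r := by
        rw [← Real.rpow_add hr0]
        have : (1 - 1 / q) * ((2 : ℕ) : ℝ) + (2 / q - 1) = 1 := by push_cast; ring
        rw [this, Real.rpow_one]
      calc _ = c1 ^ 2 / 4 * ((r : ℝ) ^ ((1 - 1 / q) * ((2 : ℕ) : ℝ)) * (r : ℝ) ^ (2 / q - 1)) * T := by ring
        _ = _ := by rw [h3]; ring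
    · rw [Set.indicator_of_notMem hY]; exact zero_le
  calc ENNReal.ofReal (c1 ^ 2 / 200 * ((r : ℝ) ^ (2 / q - 1) * T)) = ENNReal.ofReal R * ENNReal.ofReal (1 / 50) := by
        rw [← ENNReal.ofReal_mul (by positivity), hR]; congr 1; ring
    _ ≤ ENNReal.ofReal R * P i (B i)ᶜ := by gcongr
    _ = ∫⁻ Y, (B i)ᶜ.indicator (fun _ => ENNReal.ofReal R) Y ∂(P i) := by
        rw [lintegral_indicator (hBm i).compl, setLIntegral_const]
    _ ≤ _ := lintegral_mono hpt

/-- Number of coordinates where two words differ. -/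
def hamD {ι α : Type} [Fintype ι] [DecidableEq α] (x y : ι → α) : ℕ :=
  (Finset.univ.filter fun i => x i ≠ y i).card

lemma ham_ball {ι α : Type} [Fintype ι] [Fintype α] [DecidableEq ι] [DecidableEq α]
    (ht : 2 ≤ Fintype.card α) (x : ι → α) (H : Finset (ι → α))
    (hH : ∀ y ∈ H, 16 * hamD x y < Fintype.card ι) :
    (H.card : ℝ) * Real.exp ((Fintype.card ι) * Real.log (Fintype.card α) / 4) ≤
      Real.exp (Fintype.card ι * Real.log (Fintype.card α)) := by
  set L := Fintype.card ι with hL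
  set t := Fintype.card α with htt
  set l := Real.log (t : ℝ) with hl
  have ht2 : (2 : ℝ) ≤ t := by exact_mod_cast ht
  have ht0 : (0 : ℝ) < t := by linarith
  have hl0 : 0 ≤ l := Real.log_nonneg (by linarith)
  have hexp : Real.exp l = t := Real.exp_log ht0
  -- generating function
  have hgen : ∑ y : ι → α, ((t : ℝ)⁻¹) ^ (hamD x y) = ((2 * t - 1) / t) ^ L := by
    have h1 : ∀ y : ι → α, ((t : ℝ)⁻¹) ^ (hamD x y) = ∏ i, (if x i ≠ y i then (t : ℝ)⁻¹ else 1) := by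
      intro y
      rw [Finset.prod_ite, Finset.prod_const, Finset.prod_const_one, mul_one]; rfl
    simp_rw [h1]
    rw [← Fintype.prod_sum (fun i b => if x i ≠ b then (t : ℝ)⁻¹ else 1)]
    have h2 : ∀ i, ∑ b, (if x i ≠ b then (t : ℝ)⁻¹ else 1) = (2 * t - 1) / t := by
      intro i
      have h3 : ∀ b, (if x i ≠ b then (t : ℝ)⁻¹ else 1) = (t : ℝ)⁻¹ + (if x i = b then 1 - (t : ℝ)⁻¹ else 0) := by
        intro b; by_cases h : x i = b <;> simp [h]
      simp_rw [h3]
      rw [Finset.sum_add_distrib, Finset.sum_ite_eq]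
      simp only [Finset.sum_const, Finset.card_univ, ← htt, nsmul_eq_mul, Finset.mem_univ, if_true]
      field_simp
      ring
    simp_rw [h2]
    rw [Finset.prod_const, Finset.card_univ]
  have hlow : (H.card : ℝ) * Real.exp (-(l * L / 16)) ≤ ((2 * t - 1) / t) ^ L := by
    rw [← hgen]
    calc (H.card : ℝ) * Real.exp (-(l * L / 16)) = ∑ y ∈ H, Real.exp (-(l * L / 16)) := by simp
      _ ≤ ∑ y ∈ H, ((t : ℝ)⁻¹) ^ (hamD x y) := by
          refine Finset.sum_le_sum fun y hy => ?_
          have h1 : ((t : ℝ)⁻¹) ^ (hamD x y) = Real.exp (-(l * hamD x y)) := by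
            rw [← hexp, ← Real.exp_neg, ← Real.exp_nat_mul]; congr 1; ring
          rw [h1, Real.exp_le_exp]
          have h2 : (16 * hamD x y : ℝ) ≤ L := by exact_mod_cast (hH y hy).le
          nlinarith
      _ ≤ _ := Finset.sum_le_sum_of_subset_of_nonneg (Finset.subset_univ _) (fun _ _ _ => by positivity)
  have hlog : (2 * (t : ℝ) - 1) ≤ Real.exp (5 / 3 * l) := by
    have h1 : (2 * (t : ℝ) - 1) ^ 3 ≤ t ^ 5 := by
      have h2 : (2 * (t : ℝ) - 1) ^ 3 ≤ t ^ 5 := by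
        rcases Nat.lt_or_ge t 3 with h | h
        · have : t = 2 := by omega
          rw [this]; norm_num
        · have h3 : (3 : ℝ) ≤ t := by exact_mod_cast h
          have h4 : (2 * (t : ℝ) - 1) ^ 3 ≤ (2 * t) ^ 3 := pow_le_pow_left₀ (by linarith) (by linarith) 3
          have h5 : (9 : ℝ) ≤ t ^ 2 := by nlinarith
          have h6 : (0 : ℝ) < t ^ 3 := by positivity
          nlinarith
      exact h2
    refine le_of_pow_le_pow_left₀ (n := 3) (by norm_num) (Real.exp_pos _).le (h1.trans (le_of_eq ?_))
    rw [← hexp, ← Real.exp_nat_mul, ← Real.exp_nat_mul]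
    congr 1; push_cast; ring
  have hbase : (2 * (t : ℝ) - 1) / t ≤ Real.exp (2 / 3 * l) := by
    rw [div_le_iff₀ ht0]
    refine hlog.trans (le_of_eq ?_)
    rw [← hexp, ← Real.exp_add]
    congr 1; ring
  have hpow : ((2 * (t : ℝ) - 1) / t) ^ L ≤ Real.exp (L * (2 / 3 * l)) := by
    rw [Real.exp_nat_mul]
    exact pow_le_pow_left₀ (div_nonneg (by linarith) ht0.le) hbase L
  have h3 := hlow.trans hpow
  rw [Real.exp_neg, ← div_eq_mul_inv, div_le_iff₀ (Real.exp_pos _), ← Real.exp_add] at h3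
  calc (H.card : ℝ) * Real.exp (L * l / 4) ≤ Real.exp (L * (2 / 3 * l) + l * L / 16) * Real.exp (L * l / 4) := by
        gcongr
    _ ≤ _ := by
        rw [← Real.exp_add, Real.exp_le_exp]
        have : 0 ≤ (L : ℝ) * l := by positivity
        linarith

/-- Sign of a bit. -/
def sg (b : Bool) : ℝ := if b then 1 else -1

lemma sg_mul_self (b : Bool) : sg b * sg b = 1 := by cases b <;> simp [sg]
lemma sg_not (b : Bool) : sg (!b) = - sg b := by cases b <;> simp [sg]
lemma sg_le (b : Bool) : |sg b| = 1 := by cases b <;> simp [sg]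

/-- Sign matrix. -/
def sgM {r m : ℕ} (x : Fin r × Fin m → Bool) : Matrix (Fin r) (Fin m) ℝ :=
  Matrix.of fun i j => sg (x (i, j))

/-- Fourth Schatten moment. -/
def s4 {r m : ℕ} (D : Matrix (Fin r) (Fin m) ℝ) : ℝ := mip (D * Dᵀ) (D * Dᵀ)

lemma moment_term {r m : ℕ} (i k : Fin r) (j l : Fin m) :
    ∑ x : Fin r × Fin m → Bool, (sg (x (i, j)) * sg (x (k, j)) * (sg (x (i, l)) * sg (x (k, l)))) ≤
      (2 : ℝ) ^ (r * m) * ((if i = k then 1 else 0) + (if j = l then 1 else 0)) := by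
  by_cases h : i = k ∨ j = l
  · calc _ ≤ ∑ x : Fin r × Fin m → Bool, (1 : ℝ) := by
          refine Finset.sum_le_sum fun x _ => ?_
          refine (le_abs_self _).trans ?_
          simp [abs_mul, sg_le]
      _ = (2 : ℝ) ^ (r * m) := by simp
      _ ≤ _ := by
          refine le_mul_of_one_le_right (by positivity) ?_
          rcases h with h | h <;> simp only [h, if_true] <;> split_ifs <;> norm_num
  · push Not at h
    have hinv : Function.Involutive (fun x : Fin r × Fin m → Bool => Function.update x (i, j) (!x (i, j))) := by
      intro x
      ext y
      by_cases hy : y = (i, j)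
      · subst hy; simp
      · simp [hy]
    have h1 := Equiv.sum_comp (Function.Involutive.toPerm _ hinv)
      (fun x : Fin r × Fin m → Bool => (sg (x (i, j)) * sg (x (k, j)) * (sg (x (i, l)) * sg (x (k, l)))))
    have h2 : ∀ x, (fun x : Fin r × Fin m → Bool => (sg (x (i, j)) * sg (x (k, j)) * (sg (x (i, l)) * sg (x (k, l))))) (Function.Involutive.toPerm _ hinv x)
        = - (sg (x (i, j)) * sg (x (k, j)) * (sg (x (i, l)) * sg (x (k, l)))) := by
      intro x
      have e1 : (k, j) ≠ (i, j) := fun he => h.1 (Prod.ext_iff.mp he).1.symm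
      have e2 : (i, l) ≠ (i, j) := fun he => h.2 (Prod.ext_iff.mp he).2.symm
      have e3 : (k, l) ≠ (i, j) := fun he => h.2 (Prod.ext_iff.mp he).2.symm
      simp only [Function.Involutive.coe_toPerm, Function.update_self, Function.update_of_ne e1,
        Function.update_of_ne e2, Function.update_of_ne e3, sg_not]
      ring
    rw [Finset.sum_congr rfl fun x _ => h2 x, Finset.sum_neg_distrib] at h1
    have h3 : ∑ x : Fin r × Fin m → Bool, (sg (x (i, j)) * sg (x (k, j)) * (sg (x (i, l)) * sg (x (k, l)))) = 0 := by
      linarith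
    rw [h3]
    positivity

lemma moment {r m : ℕ} (hrm : r ≤ m) :
    ∑ x : Fin r × Fin m → Bool, s4 (sgM x) ≤ (2 : ℝ) ^ (r * m) * (2 * r * m ^ 2) := by
  have h1 : ∀ x : Fin r × Fin m → Bool, s4 (sgM x) =
      ∑ i, ∑ k, ∑ j, ∑ l, (sg (x (i, j)) * sg (x (k, j)) * (sg (x (i, l)) * sg (x (k, l)))) := by
    intro x
    simp only [s4, mip, Matrix.mul_apply, Matrix.transpose_apply, sgM, Matrix.of_apply, Finset.sum_mul_sum]
  simp_rw [h1]
  rw [Finset.sum_comm]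
  calc _ = ∑ i : Fin r, ∑ k : Fin r, ∑ j : Fin m, ∑ l : Fin m, ∑ x : Fin r × Fin m → Bool,
        (sg (x (i, j)) * sg (x (k, j)) * (sg (x (i, l)) * sg (x (k, l)))) := by
        refine Finset.sum_congr rfl fun i _ => ?_
        rw [Finset.sum_comm]
        refine Finset.sum_congr rfl fun k _ => ?_
        rw [Finset.sum_comm]
        refine Finset.sum_congr rfl fun j _ => ?_
        rw [Finset.sum_comm]
    _ ≤ ∑ i : Fin r, ∑ k : Fin r, ∑ j : Fin m, ∑ l : Fin m,
        (2 : ℝ) ^ (r * m) * ((if i = k then 1 else 0) + (if j = l then 1 else 0)) :=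
        Finset.sum_le_sum fun i _ => Finset.sum_le_sum fun k _ => Finset.sum_le_sum fun j _ =>
          Finset.sum_le_sum fun l _ => moment_term i k j l
    _ = (2 : ℝ) ^ (r * m) * (r * m ^ 2 + r ^ 2 * m) := by
        simp [← Finset.mul_sum, Finset.sum_add_distrib]
        ring
    _ ≤ _ := by
        have : (r : ℝ) ≤ m := by exact_mod_cast hrm
        have h0 : (0 : ℝ) ≤ r := by positivity
        gcongr
        nlinarith [mul_nonneg h0 (by positivity : (0 : ℝ) ≤ m), mul_nonneg (mul_nonneg h0 (by positivity : (0 : ℝ) ≤ m)) (sub_nonneg.mpr this)]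

lemma good_card {r m : ℕ} (hr : 1 ≤ r) (hrm : r ≤ m) :
    (15 / 16 : ℝ) * 2 ^ (r * m) ≤
      ((Finset.univ.filter fun x : Fin r × Fin m → Bool => s4 (sgM x) ≤ 32 * r * m ^ 2).card : ℝ) := by
  have hpos : (0 : ℝ) < 2 * r * m ^ 2 := by
    have h1 : (0 : ℝ) < r := by exact_mod_cast hr
    have h2 : (0 : ℝ) < m := by exact_mod_cast (by omega : 0 < m)
    positivity
  have hnn : ∀ x : Fin r × Fin m → Bool, 0 ≤ s4 (sgM x) := fun x => by
    unfold s4 mip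
    exact Finset.sum_nonneg fun _ _ => Finset.sum_nonneg fun _ _ => mul_self_nonneg _
  have h := moment hrm
  set Gd := Finset.univ.filter fun x : Fin r × Fin m → Bool => s4 (sgM x) ≤ 32 * r * m ^ 2
  set Bd := Finset.univ.filter fun x : Fin r × Fin m → Bool => ¬ s4 (sgM x) ≤ 32 * r * m ^ 2 with hBd
  have h1 : (Bd.card : ℝ) * (32 * r * m ^ 2) ≤ ∑ x : Fin r × Fin m → Bool, s4 (sgM x) := by
    calc (Bd.card : ℝ) * (32 * r * m ^ 2) = ∑ x ∈ Bd, (32 * r * m ^ 2 : ℝ) := by simp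
      _ ≤ ∑ x ∈ Bd, s4 (sgM x) := Finset.sum_le_sum fun x hx => by
          rw [hBd, Finset.mem_filter] at hx
          exact (not_le.mp hx.2).le
      _ ≤ _ := Finset.sum_le_sum_of_subset_of_nonneg (Finset.subset_univ _) (fun x _ _ => hnn x)
  have h2 : (Gd.card : ℝ) + Bd.card = 2 ^ (r * m) := by
    have := Finset.card_filter_add_card_filter_not (s := (Finset.univ : Finset (Fin r × Fin m → Bool)))
      (fun x => s4 (sgM x) ≤ 32 * r * m ^ 2)
    have h3 : (Finset.univ : Finset (Fin r × Fin m → Bool)).card = 2 ^ (r * m) := by simp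
    have h5 : Gd.card + Bd.card = 2 ^ (r * m) := by rw [← h3]; exact this
    rw [← Nat.cast_add, h5]; push_cast; rfl
  have h4 : (Bd.card : ℝ) * 16 ≤ 2 ^ (r * m) := by
    refine le_of_mul_le_mul_right (?_ : _ ≤ _) hpos
    linarith
  linarith

lemma mip_comm {I J : Type} [Fintype I] [Fintype J] (M W : Matrix I J ℝ) : mip M W = mip W M := by
  simp only [mip, mul_comm]

lemma mip_add {I J : Type} [Fintype I] [Fintype J] (M N W : Matrix I J ℝ) :
    mip (M + N) W = mip M W + mip N W := by
  simp [mip, add_mul, Finset.sum_add_distrib]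

lemma mip_add_right {I J : Type} [Fintype I] [Fintype J] (M N W : Matrix I J ℝ) :
    mip W (M + N) = mip W M + mip W N := by
  rw [mip_comm, mip_add, mip_comm M, mip_comm N]

lemma mip_sub_right {I J : Type} [Fintype I] [Fintype J] (M N W : Matrix I J ℝ) :
    mip W (M - N) = mip W M - mip W N := by
  rw [mip_comm, mip_sub, mip_comm M, mip_comm N]

lemma mip_smul_right {I J : Type} [Fintype I] [Fintype J] (a : ℝ) (M W : Matrix I J ℝ) :
    mip W (a • M) = a * mip W M := by
  rw [mip_comm, mip_smul, mip_comm M]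

lemma mip_self_nonneg {I J : Type} [Fintype I] [Fintype J] (M : Matrix I J ℝ) : 0 ≤ mip M M :=
  Finset.sum_nonneg fun _ _ => Finset.sum_nonneg fun _ _ => mul_self_nonneg _

lemma mip_mul_left {I J K : Type} [Fintype I] [Fintype J] [Fintype K] (A : Matrix I K ℝ) (M : Matrix K J ℝ)
    (W : Matrix I J ℝ) : mip (A * M) W = mip M (Aᵀ * W) := by
  rw [mip_eq_trace, mip_eq_trace, Matrix.transpose_mul, Matrix.transpose_transpose, Matrix.mul_assoc,
    Matrix.trace_mul_comm, Matrix.mul_assoc]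

lemma mip_mul_right {I J K : Type} [Fintype I] [Fintype J] [Fintype K] (M : Matrix I K ℝ) (B : Matrix K J ℝ)
    (W : Matrix I J ℝ) : mip (M * B) W = mip M (W * Bᵀ) := by
  rw [mip_eq_trace, mip_eq_trace, Matrix.transpose_mul, Matrix.transpose_transpose, Matrix.mul_assoc]

lemma mip_transpose {I J : Type} [Fintype I] [Fintype J] (M W : Matrix I J ℝ) : mip Mᵀ Wᵀ = mip M W := by
  simp only [mip, Matrix.transpose_apply]
  rw [Finset.sum_comm]

lemma dual {r m : ℕ} (D : Matrix (Fin r) (Fin m) ℝ) (lam : ℝ) (hl : 0 < lam) :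
    ∃ W : Matrix (Fin r) (Fin m) ℝ, (∀ z, lam * l2norm (Wᵀ *ᵥ z) ^ 2 ≤ l2norm z ^ 2) ∧
      ∀ τ : ℝ, 2 * τ * mip D D - τ ^ 2 * (s4 D + lam * mip D D) ≤ mip D W := by
  set G : Matrix (Fin r) (Fin r) ℝ := D * Dᵀ + lam • 1 with hG
  have hpd : G.PosDef := by
    rw [hG, add_comm]
    refine Matrix.PosDef.add_posSemidef (Matrix.PosDef.smul Matrix.PosDef.one hl) ?_
    have := Matrix.posSemidef_self_mul_conjTranspose D
    rwa [Matrix.conjTranspose_eq_transpose_of_trivial] at this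
  have hu : IsUnit G.det := (Matrix.isUnit_iff_isUnit_det _).mp hpd.isUnit
  have hGt : Gᵀ = G := by simp [hG]
  have hGW : G * (G⁻¹ * D) = D := by rw [← Matrix.mul_assoc, Matrix.mul_nonsing_inv _ hu, Matrix.one_mul]
  refine ⟨G⁻¹ * D, fun z => ?_, fun τ => ?_⟩
  · have e1 : (G⁻¹ * D)ᵀ *ᵥ z = Dᵀ *ᵥ (G⁻¹ *ᵥ z) := by
      rw [Matrix.transpose_mul, Matrix.transpose_nonsing_inv, hGt, Matrix.mulVec_mulVec]
    rw [e1]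
    set y := G⁻¹ *ᵥ z with hy
    have e2 : z = D *ᵥ (Dᵀ *ᵥ y) + lam • y := by
      have : G *ᵥ y = z := by rw [hy, Matrix.mulVec_mulVec, Matrix.mul_nonsing_inv _ hu, Matrix.one_mulVec]
      rw [← this, hG, Matrix.add_mulVec, Matrix.smul_mulVec, Matrix.one_mulVec, Matrix.mulVec_mulVec y D Dᵀ]
    have e3 : y ⬝ᵥ (D *ᵥ (Dᵀ *ᵥ y)) = l2norm (Dᵀ *ᵥ y) ^ 2 := by
      rw [l2norm_sq, Matrix.dotProduct_mulVec, ← Matrix.mulVec_transpose]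
    have e4 : l2norm z ^ 2 = l2norm (D *ᵥ (Dᵀ *ᵥ y)) ^ 2 + 2 * lam * l2norm (Dᵀ *ᵥ y) ^ 2 + lam ^ 2 * l2norm y ^ 2 := by
      rw [← e3, l2norm_sq z, l2norm_sq (D *ᵥ (Dᵀ *ᵥ y)), l2norm_sq y]
      conv_lhs => rw [e2]
      simp only [add_dotProduct, dotProduct_add, smul_dotProduct, dotProduct_smul, smul_eq_mul]
      rw [dotProduct_comm (D *ᵥ (Dᵀ *ᵥ y)) y]
      ring
    rw [e4]
    have := mul_nonneg hl.le (sq_nonneg (l2norm (Dᵀ *ᵥ y)))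
    nlinarith [sq_nonneg (l2norm (D *ᵥ (Dᵀ *ᵥ y))), mul_nonneg (sq_nonneg lam) (sq_nonneg (l2norm y))]
  · set W := G⁻¹ * D with hW
    have hq : ∀ V : Matrix (Fin r) (Fin m) ℝ, mip V (G * V) = mip (Dᵀ * V) (Dᵀ * V) + lam * mip V V := by
      intro V
      rw [hG, Matrix.add_mul, mip_add_right, Matrix.smul_mul, Matrix.one_mul, mip_smul_right,
        mip_mul_left, Matrix.transpose_transpose, Matrix.mul_assoc]
    have h0 : 0 ≤ mip (τ • D - W) (G * (τ • D - W)) := by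
      rw [hq]
      exact add_nonneg (mip_self_nonneg _) (mul_nonneg hl.le (mip_self_nonneg _))
    have h1 : mip W (G * D) = mip D D := by
      rw [mip_comm, mip_mul_left, hGt, hGW]
    have h2 : mip D (G * D) = s4 D + lam * mip D D := by
      rw [hq, s4, mip_mul_left D Dᵀ, mip_mul_left Dᵀ D, Matrix.transpose_transpose, mip_comm D,
        ← Matrix.mul_assoc, mip_mul_right, ← mip_mul_left, mip_comm]
    rw [Matrix.mul_sub, Matrix.mul_smul, hGW, mip_sub, mip_smul, mip_sub_right, mip_sub_right, mip_smul_right,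
      mip_smul_right, h1, h2, mip_comm W D] at h0
    nlinarith

lemma s4_sub {r m : ℕ} (A B : Matrix (Fin r) (Fin m) ℝ) : s4 (A - B) ≤ 8 * s4 A + 8 * s4 B := by
  have e : (A - B) * (A - B)ᵀ + (A + B) * (A + B)ᵀ = (2 : ℝ) • (A * Aᵀ) + (2 : ℝ) • (B * Bᵀ) := by
    rw [Matrix.transpose_sub, Matrix.transpose_add]
    simp only [Matrix.sub_mul, Matrix.mul_sub, Matrix.add_mul, Matrix.mul_add, two_smul]
    abel
  set P := (A - B) * (A - B)ᵀ
  set Q := (A + B) * (A + B)ᵀ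
  have h1 : 0 ≤ mip P Q := by
    have : mip P Q = mip ((A - B)ᵀ * (A + B)) ((A - B)ᵀ * (A + B)) := by
      rw [mip_mul_left, mip_mul_left, Matrix.transpose_transpose,mip_comm, ← Matrix.mul_assoc, mip_mul_right,
        Matrix.transpose_transpose, mip_mul_left, Matrix.transpose_transpose]
    rw [this]; exact mip_self_nonneg _
  have h2 : mip (P + Q) (P + Q) = mip P P + 2 * mip P Q + mip Q Q := by
    rw [mip_add, mip_add_right, mip_add_right, mip_comm Q P]; ring
  have h3 : mip (P + Q) (P + Q) ≤ 8 * s4 A + 8 * s4 B := by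
    rw [e, s4, s4]
    simp only [mip_add, mip_add_right, mip_smul, mip_smul_right]
    have := mip_self_nonneg (A * Aᵀ - B * Bᵀ)
    rw [mip_sub, mip_sub_right, mip_sub_right] at this
    linarith
  have := mip_self_nonneg Q
  change mip P P ≤ _
  linarith

lemma sign_dual {r m : ℕ} (hr : 1 ≤ r) (hm : 1 ≤ m) (x y : Fin r × Fin m → Bool)
    (hx : s4 (sgM x) ≤ 32 * r * m ^ 2) (hy : s4 (sgM y) ≤ 32 * r * m ^ 2) (hxy : r * m ≤ 16 * hamD x y) :
    ∃ W : Matrix (Fin r) (Fin m) ℝ, (∀ z, l2norm (Wᵀ *ᵥ z) ≤ l2norm z) ∧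
      1 / 10000 * Real.sqrt r ≤ mip ((Real.sqrt (r * m))⁻¹ • sgM x - (Real.sqrt (r * m))⁻¹ • sgM y) W := by
  have hr0 : (0 : ℝ) < r := by exact_mod_cast hr
  have hm0 : (0 : ℝ) < m := by exact_mod_cast hm
  obtain ⟨W, hW, hD⟩ := dual (sgM x - sgM y) m hm0
  set D := sgM x - sgM y with hDd
  have hDD : mip D D = 4 * hamD x y := by
    have h1 : ∀ i j, D i j * D i j = if x (i, j) ≠ y (i, j) then 4 else 0 := by
      intro i j
      simp only [hDd, Matrix.sub_apply, sgM, Matrix.of_apply]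
      cases x (i, j) <;> cases y (i, j) <;> norm_num [sg]
    simp only [mip, h1]
    rw [← Fintype.sum_prod_type (fun z : Fin r × Fin m => if x z ≠ y z then (4 : ℝ) else 0), ← Finset.sum_filter,
      Finset.sum_const, nsmul_eq_mul, hamD, mul_comm]
  have hle : (hamD x y : ℝ) ≤ r * m := by
    have : hamD x y ≤ r * m := by
      refine (Finset.card_filter_le _ _).trans ?_
      simp
    exact_mod_cast this
  have hge : (r * m : ℝ) ≤ 16 * hamD x y := by exact_mod_cast hxy
  have h4 : s4 D ≤ 512 * r * m ^ 2 := (s4_sub _ _).trans (by linarith)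
  have hlow : (r : ℝ) / 8256 ≤ mip D W := by
    refine le_trans ?_ (hD (1 / (2064 * m)))
    have h5 : s4 D + m * mip D D ≤ 516 * r * m ^ 2 := by
      rw [hDD]; nlinarith
    have h6 : (1 / (2064 * (m : ℝ))) ^ 2 * (s4 D + m * mip D D) ≤ (1 / (2064 * (m : ℝ))) ^ 2 * (516 * r * m ^ 2) := by
      gcongr
    have h7 : (1 / (2064 * (m : ℝ))) ^ 2 * (516 * r * m ^ 2) = r / 8256 := by field_simp; norm_num
    have h8 : (r : ℝ) / 4128 ≤ 2 * (1 / (2064 * (m : ℝ))) * mip D D := by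
      have : 2 * (1 / (2064 * (m : ℝ))) * (r * m / 4) = r / 4128 := by field_simp; norm_num
      rw [← this]
      gcongr
      rw [hDD]; linarith
    linarith
  refine ⟨Real.sqrt m • W, fun z => ?_, ?_⟩
  · rw [Matrix.transpose_smul, Matrix.smul_mulVec]
    apply (sq_le_sq₀ (l2norm_nonneg _) (l2norm_nonneg _)).mp
    rw [l2norm_smul, mul_pow, sq_abs, Real.sq_sqrt hm0.le]
    exact hW z
  · rw [← smul_sub, mip_smul, mip_smul_right, Real.sqrt_mul hr0.le, mul_inv]
    have e : (Real.sqrt r)⁻¹ * (Real.sqrt m)⁻¹ * (Real.sqrt m * mip D W) = mip D W / Real.sqrt r := by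
      have : Real.sqrt m ≠ 0 := (Real.sqrt_pos.mpr hm0).ne'
      field_simp
    rw [e, le_div_iff₀ (Real.sqrt_pos.mpr hr0), mul_assoc, Real.mul_self_sqrt hr0.le]
    linarith

/-- A family of small matrices which is hard to distinguish but well separated. -/
def Fam (R C : Type) [Fintype R] [Fintype C] (r k : ℕ) (lam c1 : ℝ) : Prop :=
  ∃ (ι : Type) (_ : Fintype ι) (E : ι → Matrix R C ℝ) (G : Finset ι),
    G.Nonempty ∧ Real.log 2 ≤ lam ∧ (∀ i, mip (E i) (E i) ≤ 1) ∧
    (∀ i, ∃ S : Finset R, S.card ≤ k ∧ ∀ l, l ∉ S → ∀ j, E i l j = 0) ∧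
    (∀ i ∈ G, ∀ H : Finset ι, H ⊆ G →
      (∀ j ∈ H, ¬ ∃ W : Matrix R C ℝ, (∀ z, l2norm (Wᵀ *ᵥ z) ≤ l2norm z) ∧
        c1 * Real.sqrt r ≤ mip (E i - E j) W) →
      (H.card : ℝ) * Real.exp (lam / 8) ≤ G.card)

lemma frob_le_one {p m : ℕ} (F : Matrix (Fin p) (Fin m) ℝ) (h : mip F F ≤ 1) : frobNorm F ≤ 1 := by
  have e : frobNorm F ^ 2 = mip F F := by
    rw [frobNorm_sq, mip]; simp only [sq]
  nlinarith [frobNorm_nonneg F]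

lemma contr_iff {R C : Type} [Fintype R] [Fintype C] (W : Matrix R C ℝ)
    (h : ∀ z, l2norm (Wᵀ *ᵥ z) ≤ l2norm z) (w : C → ℝ) : l2norm (W *ᵥ w) ≤ l2norm w := by
  have := contr_transpose Wᵀ h w
  rwa [Matrix.transpose_transpose] at this

lemma Fam.transpose {R C : Type} [Fintype R] [Fintype C] {r k : ℕ} {lam c1 : ℝ} (h : Fam R C r k lam c1) :
    Fam C R r (Fintype.card C) lam c1 := by
  obtain ⟨ι, _, E, G, h1, h2, h3, h4, h5⟩ := h
  refine ⟨ι, inferInstance, fun i => (E i)ᵀ, G, h1, h2, fun i => ?_, fun i => ⟨Finset.univ, by simp, by simp⟩, ?_⟩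
  · rw [mip_transpose]; exact h3 i
  · intro i hi H hH hs
    refine h5 i hi H hH fun j hj => ?_
    rintro ⟨W, hW, hW'⟩
    refine hs j hj ⟨Wᵀ, fun z => ?_, ?_⟩
    · rw [Matrix.transpose_transpose]; exact contr_iff W hW z
    · rw [← Matrix.transpose_sub, mip_transpose]; exact hW'

lemma emb_mip {R C P : Type} [Fintype R] [Fintype C] [Fintype P] [DecidableEq R] [DecidableEq P] (φ : R → P)
    (hφ : Function.Injective φ) (A B : Matrix R C ℝ) : mip (embM φ * A) (embM φ * B) = mip A B := by
  rw [mip_mul_left, ← Matrix.mul_assoc, embM_tmul φ hφ, Matrix.one_mul]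

lemma emb_mip_right {R C P : Type} [Fintype R] [Fintype C] [Fintype P] [DecidableEq C] [DecidableEq P] (φ : C → P)
    (hφ : Function.Injective φ) (A B : Matrix R C ℝ) : mip (A * (embM φ)ᵀ) (B * (embM φ)ᵀ) = mip A B := by
  rw [mip_mul_right, Matrix.transpose_transpose, Matrix.mul_assoc, embM_tmul φ hφ, Matrix.mul_one]

lemma embM_row {R C P : Type} [Fintype R] [Fintype C] [DecidableEq P] (φ : R → P) (A : Matrix R C ℝ) (S : Finset R)
    (hS : ∀ l, l ∉ S → ∀ j, A l j = 0) (l : P) (hl : l ∉ S.image φ) (j : C) : (embM φ * A) l j = 0 := by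
  rw [Matrix.mul_apply]
  refine Finset.sum_eq_zero fun a _ => ?_
  by_cases ha : a ∈ S
  · have : l ≠ φ a := fun h => hl (h ▸ Finset.mem_image_of_mem φ ha)
    simp [embM, this]
  · rw [hS a ha j, mul_zero]

lemma config_rows {p m s r k : ℕ} (hp : r ≤ p) (hm : r ≤ m) (hrs : r ≤ s) (lam c1 : ℝ)
    (h : Fam (Fin r) (Fin m) r k lam c1) : Config p m s r hp hm lam c1 := by
  obtain ⟨ι, _, E, G, h1, h2, h3, -, h5⟩ := h
  have hi := Fin.castLE_injective hp
  refine ⟨ι, inferInstance, fun i => embM (Fin.castLE hp) * E i, G, h1, h2, fun i => ?_, fun i => ⟨fun a b => ?_, ?_⟩, ?_⟩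
  · exact frob_le_one _ (by rw [emb_mip _ hi]; exact h3 i)
  · have : a • baseJ hp hm + b • (embM (Fin.castLE hp) * E i) =
      embM (Fin.castLE hp) * (a • (embM (Fin.castLE hm))ᵀ + b • E i) := by
      rw [Matrix.mul_add, Matrix.mul_smul, Matrix.mul_smul, baseJ]
    rw [this]
    refine (Matrix.rank_mul_le_left _ _).trans ?_
    simpa using Matrix.rank_le_width (embM (Fin.castLE hp))
  · refine ⟨Finset.univ.image (Fin.castLE hp), Finset.card_image_le.trans (by simpa using hrs), fun l hl j => ?_⟩
    exact ⟨embM_row _ _ Finset.univ (by simp) l hl j, embM_row _ _ Finset.univ (by simp) l hl j⟩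
  · intro i hiG H hH hs
    refine h5 i hiG H hH fun j hj => ?_
    rintro ⟨W, hW, hW'⟩
    refine hs j hj ⟨embM (Fin.castLE hp) * W, ?_, ?_⟩
    · have := goodW_of (embM (Fin.castLE hp)) Wᵀ
        (fun z => contr_transpose _ (fun w => (embM_mulVec_norm _ hi w).le) z) hW
      rwa [Matrix.transpose_transpose] at this
    · rw [← Matrix.mul_sub, emb_mip _ hi]; exact hW'

lemma config_cols {R : Type} [Fintype R] [DecidableEq R] {p m s r k : ℕ} (hp : r ≤ p) (hm : r ≤ m)
    (hk : r + k ≤ s) (φ : R → Fin p) (hφ : Function.Injective φ) (lam c1 : ℝ)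
    (h : Fam R (Fin r) r k lam c1) : Config p m s r hp hm lam c1 := by
  obtain ⟨ι, _, E, G, h1, h2, h3, h4, h5⟩ := h
  have hi := Fin.castLE_injective hm
  refine ⟨ι, inferInstance, fun i => embM φ * E i * (embM (Fin.castLE hm))ᵀ, G, h1, h2, fun i => ?_,
    fun i => ⟨fun a b => ?_, ?_⟩, ?_⟩
  · exact frob_le_one _ (by rw [emb_mip_right _ hi, emb_mip _ hφ]; exact h3 i)
  · have : a • baseJ hp hm + b • (embM φ * E i * (embM (Fin.castLE hm))ᵀ) =
      (a • embM (Fin.castLE hp) + b • (embM φ * E i)) * (embM (Fin.castLE hm))ᵀ := by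
      rw [Matrix.add_mul, Matrix.smul_mul, Matrix.smul_mul, baseJ]
    rw [this]
    refine (Matrix.rank_mul_le_left _ _).trans ?_
    simpa using Matrix.rank_le_width (a • embM (Fin.castLE hp) + b • (embM φ * E i))
  · obtain ⟨S, hS, hS'⟩ := h4 i
    refine ⟨Finset.univ.image (Fin.castLE hp) ∪ S.image φ, ?_, fun l hl j => ?_⟩
    · refine (Finset.card_union_le _ _).trans (le_trans (add_le_add Finset.card_image_le Finset.card_image_le) ?_)
      simp only [Finset.card_univ, Fintype.card_fin]
      omega
    · rw [Finset.mem_union, not_or] at hl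
      refine ⟨embM_row _ _ Finset.univ (by simp) l hl.1 j, ?_⟩
      change (embM φ * E i * (embM (Fin.castLE hm))ᵀ) l j = 0
      rw [Matrix.mul_assoc]
      refine embM_row _ _ S (fun l hl j => ?_) l hl.2 j
      rw [Matrix.mul_apply]
      exact Finset.sum_eq_zero fun a _ => by rw [hS' l hl, zero_mul]
  · intro i hiG H hH hs
    refine h5 i hiG H hH fun j hj => ?_
    rintro ⟨W, hW, hW'⟩
    refine hs j hj ⟨embM φ * W * (embM (Fin.castLE hm))ᵀ, ?_, ?_⟩
    · refine goodW_of (embM φ * W) (embM (Fin.castLE hm)) (fun z => ?_) (fun w => (embM_mulVec_norm _ hi w).le)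
      refine contr_transpose _ (fun w => ?_) z
      rw [← Matrix.mulVec_mulVec, embM_mulVec_norm _ hφ]
      exact contr_iff W hW w
    · rw [← Matrix.sub_mul, ← Matrix.mul_sub, emb_mip_right _ hi, emb_mip _ hφ]; exact hW'

lemma sign_fam {r m : ℕ} (hr : 1 ≤ r) (hrm : r ≤ m) :
    Fam (Fin r) (Fin m) r r ((r * m : ℕ) * Real.log 2) (1 / 10000) := by
  classical
  have hr0 : (0 : ℝ) < r := by exact_mod_cast hr
  have hm0 : (0 : ℝ) < m := by exact_mod_cast (by omega : 0 < m)
  have hrm1 : 1 ≤ r * m := Nat.mul_pos hr (by omega)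
  have hl2 : 0 < Real.log 2 := Real.log_pos (by norm_num)
  have hlam : Real.log 2 ≤ ((r * m : ℕ) : ℝ) * Real.log 2 :=
    le_mul_of_one_le_left hl2.le (by exact_mod_cast hrm1)
  have hG := good_card hr hrm
  have hexp : Real.exp (((r * m : ℕ) : ℝ) * Real.log 2) = 2 ^ (r * m) := by
    rw [Real.exp_nat_mul, Real.exp_log (by norm_num)]
  refine ⟨Fin r × Fin m → Bool, inferInstance, fun x => (Real.sqrt (r * m))⁻¹ • sgM x,
    Finset.univ.filter fun x : Fin r × Fin m → Bool => s4 (sgM x) ≤ 32 * r * m ^ 2, ?_, hlam, fun x => ?_,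
    fun x => ⟨Finset.univ, by simp, by simp⟩, ?_⟩
  · rw [← Finset.card_pos]
    have : (0 : ℝ) < 15 / 16 * 2 ^ (r * m) := by positivity
    exact_mod_cast this.trans_le hG
  · rw [mip_smul, mip_smul_right]
    have : mip (sgM x) (sgM x) = r * m := by simp [mip, sgM, sg_mul_self]
    rw [this, ← mul_assoc, ← mul_inv, Real.mul_self_sqrt (by positivity), inv_mul_cancel₀ (by positivity)]
  · intro x hx H hH hs
    rw [Finset.mem_filter] at hx
    have hb := ham_ball (α := Bool) (by simp) x H (fun y hy => by
      by_contra! hc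
      have hyG := (Finset.mem_filter.mp (hH hy)).2
      exact hs y hy (sign_dual hr (by omega) x y hx.2 hyG (by simpa using hc)))
    simp only [Fintype.card_prod, Fintype.card_fin, Fintype.card_bool, Nat.cast_ofNat] at hb
    set lam := ((r * m : ℕ) : ℝ) * Real.log 2 with hlamd
    rw [hexp] at hb
    refine le_trans ?_ hG
    have h1 : Real.exp (lam / 4) = Real.exp (lam / 8) * Real.exp (lam / 8) := by
      rw [← Real.exp_add]; congr 1; ring
    have h2 : (16 : ℝ) / 15 ≤ Real.exp (lam / 8) := by
      refine le_of_pow_le_pow_left₀ (n := 8) (by norm_num) (Real.exp_pos _).le ?_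
      rw [← Real.exp_nat_mul]
      have : Real.exp (Real.log 2) ≤ Real.exp ((8 : ℕ) * (lam / 8)) := by
        rw [Real.exp_le_exp]; push_cast; linarith
      rw [Real.exp_log (by norm_num)] at this
      refine le_trans (by norm_num) this
    have h3 : (H.card : ℝ) * Real.exp (lam / 8) * (16 / 15) ≤ 2 ^ (r * m) := by
      refine le_trans ?_ hb
      rw [h1, ← mul_assoc]
      gcongr
    linarith

/-- Sparse one-hot matrices. -/
def spM {r g t : ℕ} (x : Fin r × Fin g → Fin t) : Matrix (Fin r × Fin g × Fin t) (Fin r) ℝ :=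
  Matrix.of fun l c => if c = l.1 then (if x (l.1, l.2.1) = l.2.2 then 1 else 0) else 0

/-- Row coefficient of a difference of one-hot matrices. -/
def spU {r g t : ℕ} (x y : Fin r × Fin g → Fin t) (l : Fin r × Fin g × Fin t) : ℝ :=
  (if x (l.1, l.2.1) = l.2.2 then 1 else 0) - (if y (l.1, l.2.1) = l.2.2 then 1 else 0)

lemma spM_sub {r g t : ℕ} (x y : Fin r × Fin g → Fin t) (l : Fin r × Fin g × Fin t) (c : Fin r) :
    (spM x - spM y) l c = if c = l.1 then spU x y l else 0 := by
  simp only [Matrix.sub_apply, spM, Matrix.of_apply, spU]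
  split_ifs <;> simp

lemma spU_sum {r g t : ℕ} (x y : Fin r × Fin g → Fin t) (j : Fin r) (a : Fin g) :
    ∑ b, spU x y (j, a, b) ^ 2 = if x (j, a) ≠ y (j, a) then 2 else 0 := by
  by_cases h : x (j, a) = y (j, a)
  · simp [spU, h]
  · have : ∀ b, spU x y (j, a, b) ^ 2 = (if x (j, a) = b then 1 else 0) + (if y (j, a) = b then 1 else 0) := by
      intro b
      simp only [spU]
      by_cases h1 : x (j, a) = b
      · have h2 : y (j, a) ≠ b := fun h2 => h (h1.trans h2.symm)
        simp [h1, h2]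
      · by_cases h2 : y (j, a) = b <;> simp [h1, h2]
    simp only [this, Finset.sum_add_distrib, Finset.sum_ite_eq, Finset.mem_univ, if_true]
    simp [h]; norm_num

lemma spM_mip {r g t : ℕ} (x y : Fin r × Fin g → Fin t) :
    mip (spM x - spM y) (spM x - spM y) = 2 * hamD x y := by
  simp only [mip, spM_sub]
  have : ∀ l : Fin r × Fin g × Fin t, ∑ c : Fin r, (if c = l.1 then spU x y l else 0) * (if c = l.1 then spU x y l else 0)
      = spU x y l ^ 2 := by
    intro l
    simp [sq]
  simp only [this]
  rw [Fintype.sum_prod_type]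
  simp_rw [Fintype.sum_prod_type, spU_sum]
  rw [← Fintype.sum_prod_type (fun z : Fin r × Fin g => if x z ≠ y z then (2 : ℝ) else 0), ← Finset.sum_filter,
    Finset.sum_const, nsmul_eq_mul, hamD, mul_comm]

lemma spM_self {r g t : ℕ} (x : Fin r × Fin g → Fin t) : mip (spM x) (spM x) = r * g := by
  simp only [mip, spM, Matrix.of_apply]
  rw [Fintype.sum_prod_type]
  simp_rw [Fintype.sum_prod_type]
  simp

lemma spM_norm {r g t : ℕ} (x y : Fin r × Fin g → Fin t) (w : Fin r → ℝ) :
    l2norm ((spM x - spM y) *ᵥ w) ^ 2 ≤ 2 * g * l2norm w ^ 2 := by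
  rw [l2norm_sq', l2norm_sq']
  have h : ∀ l : Fin r × Fin g × Fin t, ((spM x - spM y) *ᵥ w) l = spU x y l * w l.1 := by
    intro l
    simp only [Matrix.mulVec, dotProduct, spM_sub]
    simp
  simp only [h, mul_pow]
  rw [Fintype.sum_prod_type, Finset.mul_sum]
  refine Finset.sum_le_sum fun j _ => ?_
  rw [Fintype.sum_prod_type]
  simp_rw [← Finset.sum_mul, spU_sum]
  refine mul_le_mul_of_nonneg_right ?_ (sq_nonneg _)
  calc ∑ a : Fin g, (if x (j, a) ≠ y (j, a) then (2 : ℝ) else 0) ≤ ∑ a : Fin g, (2 : ℝ) :=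
        Finset.sum_le_sum fun a _ => by split_ifs <;> norm_num
    _ = 2 * g := by simp [mul_comm]

lemma sparse_fam {r g t : ℕ} (hr : 1 ≤ r) (hg : 1 ≤ g) (ht : 2 ≤ t) :
    Fam (Fin r × Fin g × Fin t) (Fin r) r (r * g) ((r * g : ℕ) * Real.log t) (1 / 10000) := by
  classical
  have hr0 : (0 : ℝ) < r := by exact_mod_cast hr
  have hg0 : (0 : ℝ) < g := by exact_mod_cast hg
  have ht2 : (2 : ℝ) ≤ t := by exact_mod_cast ht
  have hrg1 : 1 ≤ r * g := Nat.mul_pos hr hg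
  have hlt : Real.log 2 ≤ Real.log t := Real.log_le_log (by norm_num) ht2
  have hl2 : 0 < Real.log 2 := Real.log_pos (by norm_num)
  have hlam : Real.log 2 ≤ ((r * g : ℕ) : ℝ) * Real.log t :=
    hlt.trans (le_mul_of_one_le_left (hl2.le.trans hlt) (by exact_mod_cast hrg1))
  have : NeZero t := ⟨by omega⟩
  refine ⟨Fin r × Fin g → Fin t, inferInstance, fun x => (Real.sqrt (r * g))⁻¹ • spM x,
    Finset.univ, Finset.univ_nonempty, hlam, fun x => ?_, fun x => ?_, ?_⟩
  · rw [mip_smul, mip_smul_right, spM_self, ← mul_assoc, ← mul_inv, Real.mul_self_sqrt (by positivity),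
      inv_mul_cancel₀ (by positivity)]
  · refine ⟨Finset.univ.image fun z : Fin r × Fin g => (z.1, z.2, x z), Finset.card_image_le.trans (by simp), ?_⟩
    rintro ⟨j, a, b⟩ hl c
    have : x (j, a) ≠ b := by
      intro h
      exact hl (Finset.mem_image.mpr ⟨(j, a), Finset.mem_univ _, by simp [h]⟩)
    simp [spM, this]
  · intro x _ H _ hs
    have hb := ham_ball (α := Fin t) (by simpa using ht) x H (fun y hy => by
      by_contra! hc
      simp only [Fintype.card_prod, Fintype.card_fin] at hc
      have hge : (r * g : ℝ) ≤ 16 * hamD x y := by exact_mod_cast hc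
      refine hs y hy ⟨(Real.sqrt r / 2 * (Real.sqrt (r * g))⁻¹) • (spM x - spM y), ?_, ?_⟩
      · refine fun z => contr_transpose _ (fun w => ?_) z
        rw [Matrix.smul_mulVec]
        apply (sq_le_sq₀ (l2norm_nonneg _) (l2norm_nonneg _)).mp
        rw [l2norm_smul, mul_pow, sq_abs, mul_pow, div_pow, inv_pow, Real.sq_sqrt hr0.le, Real.sq_sqrt (by positivity)]
        have h1 := mul_le_mul_of_nonneg_left (spM_norm x y w)
          (by positivity : (0 : ℝ) ≤ (r : ℝ) / 2 ^ 2 * (r * g : ℝ)⁻¹)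
        refine h1.trans ?_
        have h2 : (r : ℝ) / 2 ^ 2 * (r * g : ℝ)⁻¹ * (2 * g * l2norm w ^ 2) = 1 / 2 * l2norm w ^ 2 := by
          field_simp
        rw [h2]
        nlinarith [sq_nonneg (l2norm w)]
      · rw [← smul_sub, mip_smul, mip_smul_right, spM_mip]
        have h3 : (Real.sqrt (r * g))⁻¹ * (Real.sqrt r / 2 * (Real.sqrt (r * g))⁻¹ * (2 * hamD x y)) =
            ((Real.sqrt (r * g))⁻¹ * (Real.sqrt (r * g))⁻¹) * (Real.sqrt r * hamD x y) := by ring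
        rw [h3, ← mul_inv, Real.mul_self_sqrt (by positivity), inv_mul_eq_div, le_div_iff₀ (by positivity)]
        have h4 := Real.sqrt_nonneg (r : ℝ)
        have h5 := mul_le_mul_of_nonneg_left hge h4
        have h6 : 0 ≤ Real.sqrt r * (r * g) := by positivity
        nlinarith)
    simp only [Fintype.card_prod, Fintype.card_fin] at hb
    have hcard : (((Finset.univ : Finset (Fin r × Fin g → Fin t)).card : ℕ) : ℝ) =
        Real.exp (((r * g : ℕ) : ℝ) * Real.log t) := by
      rw [Real.exp_nat_mul, Real.exp_log (by linarith)]
      simp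
    rw [hcard]
    refine le_trans ?_ hb
    refine mul_le_mul_of_nonneg_left (Real.exp_le_exp.mpr ?_) (Nat.cast_nonneg _)
    linarith

lemma part {n m p s r : ℕ} (hr : 1 ≤ r) (hp : r ≤ p) (hm : r ≤ m) (hs : 2 * s ≤ p) (lam B : ℝ)
    (hC : Config p m s r hp hm lam (1 / 10000)) (hB : B / 16 ≤ lam)
    (γ b d σ : ℝ) (hγ : 1 < γ) (hb : 0 < b) (hd : 0 < d) (hσ : 0 < σ)
    (X : Matrix (Fin n) (Fin p) ℝ) (hX : kappaPlus X (2 * s) = b) (q : ℝ) (hq : 1 ≤ q)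
    (Ahat : Matrix (Fin n) (Fin m) ℝ → Matrix (Fin p) (Fin m) ℝ) (hA : Measurable Ahat)
    (c U : ℝ) (hc0 : 0 < c) (hc1 : c ≤ (1 / 10000) ^ 2 / 200 * ((γ - 1) / 4) ^ 2)
    (hc2 : c ≤ (1 / 10000) ^ 2 / 200 * (1 / (768 * b ^ 2)))
    (hU : U ≤ (r : ℝ) ^ (2 / q - 1) * (3 * B)) :
    ENNReal.ofReal (c * σ ^ 2 * min ((r : ℝ) ^ (2 / q - 1) * d ^ 2 / σ ^ 2) U) ≤
      ⨆ A ∈ {A : Matrix (Fin p) (Fin m) ℝ | memTheta A s r d γ},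
          ∫⁻ Y, ENNReal.ofReal (schattenNorm (Ahat Y - A) q ^ 2)
            ∂((gaussianMatrix n m (Real.toNNReal (σ ^ 2))).map (fun Z => X * A + Z)) := by
  have hlam : Real.log 2 ≤ lam := by
    obtain ⟨_, _, _, _, _, h, _⟩ := hC
    exact h
  have hlam0 : 0 < lam := (Real.log_pos (by norm_num)).trans_le hlam
  have hρ : 0 < (r : ℝ) ^ (2 / q - 1) := Real.rpow_pos_of_pos (by exact_mod_cast hr) _
  set ρ := (r : ℝ) ^ (2 / q - 1) with hρd
  have key := fun T hT hT1 hT2 => risk_of_config hr hp hm hs lam (1 / 10000) (by norm_num) hC γ b d σ hγ hb hd hσ X hX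
    q hq Ahat hA T hT hT1 hT2
  refine le_trans (ENNReal.ofReal_le_ofReal ?_)
    (key (min (((γ - 1) / 4 * d) ^ 2) (σ ^ 2 * (lam / 16) / b ^ 2)) ?_ (min_le_left _ _) ?_)
  · rcases le_total (((γ - 1) / 4 * d) ^ 2) (σ ^ 2 * (lam / 16) / b ^ 2) with h | h
    · rw [min_eq_left h]
      calc c * σ ^ 2 * min (ρ * d ^ 2 / σ ^ 2) U ≤ c * σ ^ 2 * (ρ * d ^ 2 / σ ^ 2) := by
            gcongr; exact min_le_left _ _
        _ = c * (ρ * d ^ 2) := by field_simp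
        _ ≤ (1 / 10000) ^ 2 / 200 * ((γ - 1) / 4) ^ 2 * (ρ * d ^ 2) := by gcongr
        _ = _ := by ring
    · rw [min_eq_right h]
      calc c * σ ^ 2 * min (ρ * d ^ 2 / σ ^ 2) U ≤ c * σ ^ 2 * (ρ * (3 * (16 * lam))) := by
            gcongr
            refine (min_le_right _ _).trans (hU.trans ?_)
            gcongr
            linarith
        _ ≤ (1 / 10000) ^ 2 / 200 * (1 / (768 * b ^ 2)) * σ ^ 2 * (ρ * (3 * (16 * lam))) := by gcongr
        _ = _ := by rw [← hρd]; field_simp; norm_num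
  · positivity
  · rw [← le_div_iff₀' (by positivity)]
    exact min_le_right _ _

lemma log_two_gt : (1 / 2 : ℝ) ≤ Real.log 2 := by
  have := Real.log_two_gt_d9
  linarith

lemma config1 {p m s r : ℕ} (hr : 1 ≤ r) (hp : r ≤ p) (hm : r ≤ m) (hrs : 2 * r ≤ s) (hs : 2 * s ≤ p) :
    Config p m s r hp hm ((r * (s - r) : ℕ) * Real.log 2) (1 / 10000) := by
  have h := (sign_fam hr (by omega : r ≤ s - r)).transpose
  exact config_cols hp hm (by simp; omega) (Fin.castLE (by omega : s - r ≤ p)) (Fin.castLE_injective _) _ _ h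

lemma config3 {p m s r : ℕ} (hr : 1 ≤ r) (hp : r ≤ p) (hm : r ≤ m) (hrs : 2 * r ≤ s) (hs : 2 * s ≤ p) :
    Config p m s r hp hm ((r * ((s - r) / r) : ℕ) * Real.log (p / s : ℕ)) (1 / 10000) := by
  have hg : 1 ≤ (s - r) / r := (Nat.one_le_div_iff (by omega)).mpr (by omega)
  have ht : 2 ≤ p / s := (Nat.le_div_iff_mul_le (by omega)).mpr hs
  have h := sparse_fam hr hg ht
  have hrg : r * ((s - r) / r) ≤ s - r := Nat.mul_div_le _ _
  have hcard : Fintype.card (Fin r × Fin ((s - r) / r) × Fin (p / s)) ≤ Fintype.card (Fin p) := by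
    simp only [Fintype.card_prod, Fintype.card_fin]
    rw [← mul_assoc]
    calc _ ≤ s * (p / s) := Nat.mul_le_mul_right _ (by omega)
      _ ≤ p := Nat.mul_div_le _ _
  obtain ⟨φ⟩ := Function.Embedding.nonempty_of_card_le hcard
  exact config_cols hp hm (by omega) φ φ.injective _ _ h

lemma lam1 {s r : ℕ} (hrs : 2 * r ≤ s) : ((r : ℝ) * s) / 16 ≤ (r * (s - r) : ℕ) * Real.log 2 := by
  have h1 : (2 * r : ℝ) ≤ s := by exact_mod_cast hrs
  have h2 := log_two_gt
  have h0 : (0 : ℝ) ≤ r := by positivity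
  rw [Nat.cast_mul, Nat.cast_sub (by omega)]
  have h3 : (r : ℝ) * (s / 2) ≤ r * (s - r) := by gcongr; linarith
  have h4 : (0 : ℝ) ≤ r * s := by positivity
  nlinarith

lemma lam3 {p s r : ℕ} (hr : 1 ≤ r) (hrs : 2 * r ≤ s) (hs : 2 * s ≤ p) :
    ((s : ℝ) * Real.log (Real.exp 1 * p / s)) / 16 ≤ (r * ((s - r) / r) : ℕ) * Real.log (p / s : ℕ) := by
  have hg : 1 ≤ (s - r) / r := (Nat.one_le_div_iff (by omega)).mpr (by omega)
  have ht : 2 ≤ p / s := (Nat.le_div_iff_mul_le (by omega)).mpr hs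
  have h1 : s ≤ 4 * (r * ((s - r) / r)) := by
    have h2 := Nat.div_add_mod (s - r) r
    have h3 := Nat.mod_lt (s - r) (by omega : r > 0)
    have h4 : r ≤ r * ((s - r) / r) := Nat.le_mul_of_pos_right _ hg
    omega
  have h1' : (s : ℝ) ≤ 4 * ((r * ((s - r) / r) : ℕ) : ℝ) := by exact_mod_cast h1
  have hs0 : (0 : ℝ) < s := by exact_mod_cast (by omega : 0 < s)
  have h5 : p < s * (p / s + 1) := Nat.lt_mul_div_succ p (by omega)
  set t := p / s with htd
  have ht' : (2 : ℝ) ≤ t := by exact_mod_cast ht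
  have h5' : (p : ℝ) ≤ s * (t + 1) := by exact_mod_cast h5.le
  have hp0 : (0 : ℝ) < p := by exact_mod_cast (by omega : 0 < p)
  have h6 : Real.log (Real.exp 1 * p / s) ≤ 4 * Real.log t := by
    have : (4 : ℝ) * Real.log t = Real.log ((t : ℝ) ^ 4) := by rw [Real.log_pow]; norm_num
    rw [this]
    refine Real.log_le_log (by positivity) ?_
    rw [div_le_iff₀ hs0]
    have he := Real.exp_one_lt_d9
    have h7 : (t : ℝ) + 1 ≤ 3 / 2 * t := by linarith
    have h8 : (8 : ℝ) ≤ t ^ 3 := by nlinarith [sq_nonneg ((t : ℝ) - 2)]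
    calc Real.exp 1 * p ≤ 3 * (s * (t + 1)) := by gcongr; linarith
      _ ≤ 3 * (s * (3 / 2 * t)) := by gcongr
      _ ≤ 8 * (s * t) := by nlinarith [mul_nonneg hs0.le (by linarith : (0 : ℝ) ≤ t)]
      _ ≤ t ^ 3 * (s * t) := by gcongr
      _ = t ^ 4 * s := by ring
  have h9 : 0 ≤ Real.log (t : ℝ) := Real.log_nonneg (by linarith)
  have h10 : (s : ℝ) * Real.log (Real.exp 1 * p / s) ≤ s * (4 * Real.log t) := by gcongr
  have h11 := mul_le_mul_of_nonneg_right h1' h9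
  linarith

/-- Minimax lower bound. For every γ and every value b = κ₊(2s) there is a
constant c > 0 depending only on them such that for the Gaussian model Y = XA + Z with
K⁻¹ ≤ κ₋(2s) ≤ κ₊(2s) ≤ K and s ≥ 2r, for every q ∈ [1,2] and every measurable estimator Â,
sup_{A ∈ Θ(s,r,d,γ)} E‖Â − A‖_{S_q}² ≥ c σ² {(r^{2/q−1} d²/σ²) ∧ [r^{2/q}(s+m) + r^{2/q−1} s log(ep/s)]}. -/
theorem stmt9 :
    ∀ γ b : ℝ, 1 < γ → 0 < b →
    ∃ c : ℝ, 0 < c ∧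
    ∀ (n m p s r : ℕ) (d σ K : ℝ) (X : Matrix (Fin n) (Fin p) ℝ),
      0 < σ → 0 < d → 1 ≤ r → 2 * r ≤ s → r ≤ m → s ≤ p →
      1 < K → K⁻¹ ≤ kappaMinus X (2 * s) → kappaMinus X (2 * s) ≤ kappaPlus X (2 * s) →
      kappaPlus X (2 * s) ≤ K →
      kappaPlus X (2 * s) = b →
      ∀ q ∈ Set.Icc (1 : ℝ) 2,
      ∀ Ahat : Matrix (Fin n) (Fin m) ℝ → Matrix (Fin p) (Fin m) ℝ, Measurable Ahat →
      ENNReal.ofReal (c * σ ^ 2 *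
          min ((r : ℝ) ^ (2 / q - 1) * d ^ 2 / σ ^ 2)
            ((r : ℝ) ^ (2 / q) * ((s : ℝ) + m)
              + (r : ℝ) ^ (2 / q - 1) * s * Real.log (Real.exp 1 * p / s))) ≤
        ⨆ A ∈ {A : Matrix (Fin p) (Fin m) ℝ | memTheta A s r d γ},
          ∫⁻ Y, ENNReal.ofReal (schattenNorm (Ahat Y - A) q ^ 2)
            ∂((gaussianMatrix n m (Real.toNNReal (σ ^ 2))).map (fun Z => X * A + Z)) := by
  intro γ b hγ hb
  have hg : 0 < (γ - 1) / 4 := by linarith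
  refine ⟨min ((1 / 10000) ^ 2 / 200 * ((γ - 1) / 4) ^ 2) ((1 / 10000) ^ 2 / 200 * (1 / (768 * b ^ 2))),
    lt_min (by positivity) (by positivity), ?_⟩
  intro n m p s r d σ K X hσ hd hr hrs hrm hsp hK hK1 _ _ hX q hq Ahat hA
  have h2s : 2 * s ≤ p := two_s_le X K hK hK1
  have hp : r ≤ p := by omega
  have hr0 : (0 : ℝ) < r := by exact_mod_cast hr
  have hρ : 0 < (r : ℝ) ^ (2 / q - 1) := Real.rpow_pos_of_pos hr0 _
  have hrq : (r : ℝ) ^ (2 / q) = (r : ℝ) ^ (2 / q - 1) * r := by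
    rw [← Real.rpow_add_one hr0.ne']; congr 1; ring
  have main := fun lam B hC hB hU => part (n := n) (s := s) hr hp hrm h2s lam B hC hB γ b d σ hγ hb hd hσ X hX q hq.1 Ahat hA _
    ((r : ℝ) ^ (2 / q) * ((s : ℝ) + m) + (r : ℝ) ^ (2 / q - 1) * s * Real.log (Real.exp 1 * p / s))
    (lt_min (by positivity) (by positivity)) (min_le_left _ _) (min_le_right _ _) hU
  have hsum : (r : ℝ) ^ (2 / q) * ((s : ℝ) + m) + (r : ℝ) ^ (2 / q - 1) * s * Real.log (Real.exp 1 * p / s) =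
      (r : ℝ) ^ (2 / q - 1) * (r * s + r * m + s * Real.log (Real.exp 1 * p / s)) := by
    rw [hrq]; ring
  have hor : ∀ x y z : ℝ, x + y + z ≤ 3 * x ∨ x + y + z ≤ 3 * y ∨ x + y + z ≤ 3 * z := by
    intro x y z
    by_contra! h
    linarith [h.1, h.2.1, h.2.2]
  rcases hor (r * s : ℝ) (r * m) (s * Real.log (Real.exp 1 * p / s)) with h | h | h
  · exact main _ (r * s) (config1 hr hp hrm hrs h2s) (lam1 hrs)
      (by rw [hsum]; exact mul_le_mul_of_nonneg_left h hρ.le)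
  · refine main _ (r * m) (config_rows hp hrm (by omega) _ _ (sign_fam hr hrm)) ?_
      (by rw [hsum]; exact mul_le_mul_of_nonneg_left h hρ.le)
    have h2 := log_two_gt
    have h4 : (0 : ℝ) ≤ r * m := by positivity
    push_cast
    nlinarith
  · exact main _ (s * Real.log (Real.exp 1 * p / s)) (config3 hr hp hrm hrs h2s) (lam3 hr hrs h2s)
      (by rw [hsum]; exact mul_le_mul_of_nonneg_left h hρ.le)

end
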